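/- There is a universal constant C > 1 such that for every s = (s₀,s₁,s₂) with 0 < s₀ ≤ s₁ ≤ s₂, every i ∈ {0,1,2}, and all sufficiently large n, the (n²−2)-dimensional surface area of every codimension-1 facet of P_n(s) corresponding to an edge of E_i(T_n) is bounded below by (s₀/(C s₂))^{C s_i/s₀} · |P_n(s)|^{1 − 1/(n²−1)}. -/

import Mathlib

/-!
The volume of the polytope is compared with the area of one facet by pushing most of the polytope
out through a bounded number of facets, along a bounded number of directions.

*Typical points.* The slack of a constraint `∇²x(e) ≤ s_r` is `s_r - ∇²x(e) ≥ 0`.  Translations of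
the torus preserve the polytope and the hessians of a class sum to zero, so the mean slack of every
rhombus of class `r` equals `s_r` (`mean_slack`).  By Prékopa–Leindler, the slack of a linear
functional on a convex body is rarely much smaller than its mean (`anticonc`).  Hence, with
`σ = s₀ / 1024`, for at least half of the volume the rhombi of classes `0` and `1` near at least half
of the columns on either side of the middle one of `4 q` consecutive columns have slack at least `σ`,
and the slack of one given rhombus of class `2` is at most `4 s₂` (`measure_PV_le_goodPts`).

*Bumps.* A tent-shaped function on one row, sloping by at most `σ` and only across such good
columns, violates no constraint of class `0` or `1` when added to `x`, while it raises the given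
hessian of class `2` by `σ q`.  If `σ q ≥ 4 s₂`, moving from `x` along the bump leaves the polytope
through one of at most `4 q + 1` facets of class `2`.  There are at most `2 ^ (4 q)` bumps `u`, so
half of the volume is covered by that many sets swept out by facets along vectors `-u`.  A swept
set has volume at most `2 √m ‖u‖` times the area of the facet, where `m = n² - 1` and the factor
`√m` is due to the normalisation of Hausdorff measure (`sweep_le`).  All facets of a class have the
same area, and the classes are permuted by the rotation `ω`, so this bounds the volume by the area
of any single facet of any class `i`, provided `σ q ≥ 4 s_i` (`PV_le_FV`).

*Isoperimetric form.* The polytope contains the mean-zero functions bounded by `s₀ / 4`, so that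
`|P|^{1/m} ≥ s₀ √m / 40` (`PV_lower`).  Dividing by `|P|^{1/m}` cancels the factor `s₀ √m`, and
leaves the constant `2 ^ (10 q)` with `q` of order `s_i / s₀` (`PV_rpow_le`).
-/

open MeasureTheory Filter

/-- Discrete hessian of class `r` of `x : V(T_n) → ℝ` at the base vertex `v` of a unit
rhombus of the triangular lattice torus `T_n`, where `V(T_n)` is identified with
`ZMod n × ZMod n` via `1 ↦ (1,0)`, `ω ↦ (0,1)`.  For a rhombus `{a,b,c,d}` of class `r`
(i.e. `b - a = z` with `z = 1, ω, ω²` respectively) the hessian is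
`-x a + x b - x c + x d`. -/
def hess (n : ℕ) (r : Fin 3) (x : (ZMod n × ZMod n) → ℝ) (v : ZMod n × ZMod n) : ℝ :=
  if r = 0 then -x v + x (v + (1, 0)) - x (v + (2, 1)) + x (v + (1, 1))
  else if r = 1 then -x v + x (v + (0, 1)) - x (v + (-1, 1)) + x (v + (-1, 0))
  else -x v + x (v + (-1, -1)) - x (v + (-1, -2)) + x (v + (0, -1))

/-- The polytope `P_n(s)`: mean-zero functions on `V(T_n)` with `∇²x ≼ s`. -/
def polyP (n : ℕ) [NeZero n] (s : Fin 3 → ℝ) : Set ((ZMod n × ZMod n) → ℝ) :=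
  {x | (∑ v : ZMod n × ZMod n, x v) = 0 ∧ ∀ r v, hess n r x v ≤ s r}

/-- The polytope `P̃_n(s)`: functions on `V(T_n)` vanishing at `0` with `∇²x ≼ s`. -/
def polyPt (n : ℕ) [NeZero n] (s : Fin 3 → ℝ) : Set ((ZMod n × ZMod n) → ℝ) :=
  {x | x 0 = 0 ∧ ∀ r v, hess n r x v ≤ s r}

/-- The `d`-dimensional (Hausdorff) volume of a set of functions on `V(T_n)`, computed
with respect to the Euclidean structure on `ℝ^{V(T_n)}`. -/
noncomputable def evol (n : ℕ) [NeZero n] (d : ℝ) (A : Set ((ZMod n × ZMod n) → ℝ)) : ℝ :=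
  (μH[d] ((EuclideanSpace.equiv (ZMod n × ZMod n) ℝ).symm '' A)).toReal

/-- `f_n(s) = |P_n(s)|^{1/(n²-1)}`. -/
noncomputable def fn (n : ℕ) [NeZero n] (s : Fin 3 → ℝ) : ℝ :=
  evol n ((n : ℝ) ^ 2 - 1) (polyP n s) ^ (1 / ((n : ℝ) ^ 2 - 1))

/-- The codimension-1 facet of `P_n(s)` corresponding to the edge of class `r` based at
vertex `v`: the face on which the constraint `∇²x(e) ≤ s_r` holds with equality. -/
def facet (n : ℕ) [NeZero n] (s : Fin 3 → ℝ) (r : Fin 3) (v : ZMod n × ZMod n) :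
    Set ((ZMod n × ZMod n) → ℝ) :=
  {x ∈ polyP n s | hess n r x v = s r}

open scoped ENNReal NNReal Pointwise

/-! ### The Prékopa–Leindler inequality -/

/-- One-dimensional Brunn–Minkowski for compact sets: with `a = max A` and `b = min B`, the
translates `b + A` and `a + B` meet in at most one point and both lie in `2 • C`. -/
theorem bm_real_compact {A B : Set ℝ} (hA : IsCompact A) (hB : IsCompact B)
    (hA' : A.Nonempty) (hB' : B.Nonempty) {C : Set ℝ}
    (hC : ∀ a ∈ A, ∀ b ∈ B, (a + b) / 2 ∈ C) :
    volume A + volume B ≤ 2 * volume C := by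
  obtain ⟨a, ha, hamax⟩ := hA.exists_isGreatest hA'
  obtain ⟨b, hb, hbmin⟩ := hB.exists_isLeast hB'
  have h1 : volume ((fun x => b + x) '' A) = volume A := by
    simp
  have h2 : volume ((fun x => a + x) '' B) = volume B := by
    simp
  have h3 : volume ((2:ℝ) • C) = 2 * volume C := by
    rw [Measure.addHaar_smul]; simp
  rw [← h1, ← h2, ← h3]
  have hd : AEDisjoint volume ((fun x => b + x) '' A) ((fun x => a + x) '' B) := by
    refine measure_mono_null (t := {a + b}) ?_ (by simp)
    rintro x ⟨⟨y, hy, rfl⟩, ⟨z, hz, hyz⟩⟩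
    have := hamax hy
    have := hbmin hz
    simp only at hyz
    simp only [Set.mem_singleton_iff]
    linarith
  rw [← measure_union₀ ?_ hd]
  · apply measure_mono
    rintro x (⟨y, hy, rfl⟩ | ⟨y, hy, rfl⟩)
    · exact ⟨_, hC y hy b hb, by simp; ring⟩
    · exact ⟨_, hC a ha y hy, by simp; ring⟩
  · exact (hB.image (by fun_prop)).measurableSet.nullMeasurableSet

/-- One-dimensional Brunn–Minkowski for measurable sets, by inner regularity. -/
theorem bm_real {A B : Set ℝ} (hA : MeasurableSet A) (hB : MeasurableSet B)
    (hA' : A.Nonempty) (hB' : B.Nonempty) {C : Set ℝ}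
    (hC : ∀ a ∈ A, ∀ b ∈ B, (a + b) / 2 ∈ C) :
    volume A + volume B ≤ 2 * volume C := by
  obtain ⟨a, ha⟩ := hA'
  obtain ⟨b, hb⟩ := hB'
  have key : ∀ K ⊆ A, IsCompact K → ∀ K' ⊆ B, IsCompact K' →
      volume K + volume K' ≤ 2 * volume C := by
    intro K hK hKc K' hK' hKc'
    calc volume K + volume K' ≤ volume (insert a K) + volume (insert b K') := by
          gcongr <;> exact Set.subset_insert _ _
      _ ≤ _ := by
          apply bm_real_compact (hKc.insert a) (hKc'.insert b) ⟨a, by simp⟩ ⟨b, by simp⟩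
          intro x hx y hy
          refine hC x ?_ y ?_
          · rcases hx with rfl | hx
            exacts [ha, hK hx]
          · rcases hy with rfl | hy
            exacts [hb, hK' hy]
  rw [hA.measure_eq_iSup_isCompact, hB.measure_eq_iSup_isCompact]
  simp only [iSup_and']
  refine ENNReal.biSup_add_biSup_le' (p := fun K => K ⊆ A ∧ IsCompact K)
    (q := fun K => K ⊆ B ∧ IsCompact K) ⟨∅, by simp⟩ ⟨∅, by simp⟩ ?_
  rintro K ⟨h1, h2⟩ K' ⟨h3, h4⟩
  exact key K h1 h2 K' h3 h4

/-- The one-dimensional Prékopa–Leindler inequality in its linear form, for functions normalised to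
have supremum one: Brunn–Minkowski on the superlevel sets, which for `f` and `g` become empty at the
same height, integrated by the layer cake formula. -/
theorem pl_real_norm {f g h : ℝ → ℝ} (hf : Measurable f) (hg : Measurable g) (hh : Measurable h)
    (f0 : 0 ≤ f) (g0 : 0 ≤ g) (h0 : 0 ≤ h) (f1 : ∀ x, f x ≤ 1) (g1 : ∀ x, g x ≤ 1)
    (fs : ∀ t < 1, ∃ x, t < f x) (gs : ∀ t < 1, ∃ x, t < g x)
    (H : ∀ x y, min (f x) (g y) ≤ h ((x + y) / 2)) :
    (∫⁻ x, ENNReal.ofReal (f x)) + (∫⁻ x, ENNReal.ofReal (g x))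
      ≤ 2 * ∫⁻ x, ENNReal.ofReal (h x) := by
  have L : ∀ {k : ℝ → ℝ}, Measurable k → 0 ≤ k → ∫⁻ x, ENNReal.ofReal (k x) =
      ∫⁻ t in Set.Ioi 0, volume {a | t < k a} := fun {k} hk k0 =>
    lintegral_eq_lintegral_meas_lt volume (Eventually.of_forall k0) hk.aemeasurable
  have M : ∀ {k : ℝ → ℝ}, Measurable fun t => volume {a | t < k a} := by
    intro k
    refine Antitone.measurable ?_
    intro t t' htt
    exact measure_mono fun a ha => lt_of_le_of_lt htt ha
  rw [L hf f0, L hg g0, L hh h0, ← lintegral_add_left M, ← lintegral_const_mul _ M]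
  refine setLIntegral_mono (M.const_mul _) fun t ht => ?_
  by_cases h1 : t < 1
  · refine bm_real (measurableSet_lt measurable_const hf) (measurableSet_lt measurable_const hg)
      (fs t h1) (gs t h1) ?_
    intro a ha b hb
    exact lt_of_lt_of_le (lt_min ha hb) (H a b)
  · have e1 : {a | t < f a} = ∅ := by
      ext a; simpa using (f1 a).trans (not_lt.1 h1)
    have e2 : {a | t < g a} = ∅ := by
      ext a; simpa using (g1 a).trans (not_lt.1 h1)
    simp [e1, e2]

/-- The Prékopa–Leindler inequality at the parameter `1 / 2` for the measure `μ`.  Both the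
hypothesis and the conclusion are squared, which avoids square roots in `ℝ≥0∞`. -/
def PL {E : Type*} [AddCommGroup E] [Module ℝ E] [MeasurableSpace E] (μ : Measure E) : Prop :=
  ∀ f g h : E → ℝ≥0∞, Measurable f → Measurable g → Measurable h →
    (∀ x y, f x * g y ≤ h ((1 / 2 : ℝ) • (x + y)) ^ 2) →
    (∫⁻ x, f x ∂μ) * (∫⁻ x, g x ∂μ) ≤ (∫⁻ x, h x ∂μ) ^ 2

/-- Reduction to `pl_real_norm`: divide `f` and `g` by their suprema `a` and `b`, truncate `h` at
`√(ab)` and divide it by this number, and pass from the sum to the product by AM–GM. -/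
theorem pl_real_bdd {f g h : ℝ → ℝ≥0∞} (hf : Measurable f) (hg : Measurable g)
    (hh : Measurable h) (hfb : (⨆ x, f x) ≠ ∞) (hgb : (⨆ x, g x) ≠ ∞)
    (H : ∀ x y, f x * g y ≤ h ((1 / 2 : ℝ) • (x + y)) ^ 2) :
    (∫⁻ x, f x) * (∫⁻ x, g x) ≤ (∫⁻ x, h x) ^ 2 := by
  obtain ⟨a, ha⟩ : ∃ a : ℝ≥0, (a : ℝ≥0∞) = ⨆ x, f x := ⟨_, ENNReal.coe_toNNReal hfb⟩
  obtain ⟨b, hb⟩ : ∃ b : ℝ≥0, (b : ℝ≥0∞) = ⨆ x, g x := ⟨_, ENNReal.coe_toNNReal hgb⟩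
  have fa : ∀ x, f x ≤ a := fun x => ha ▸ le_iSup f x
  have gb : ∀ x, g x ≤ b := fun x => hb ▸ le_iSup g x
  rcases eq_or_ne a 0 with rfl | a0
  · have : ∀ x, f x = 0 := fun x => by simpa using fa x
    simp [this]
  rcases eq_or_ne b 0 with rfl | b0
  · have : ∀ x, g x = 0 := fun x => by simpa using gb x
    simp [this]
  have a0' : 0 < a := pos_iff_ne_zero.2 a0
  have b0' : 0 < b := pos_iff_ne_zero.2 b0
  set c : ℝ≥0 := NNReal.sqrt (a * b) with hc
  have c0 : 0 < c := by simp [hc, a0', b0']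
  have c2 : c ^ 2 = a * b := by simp [hc]
  have e1 : ∀ x, ENNReal.ofReal ((f x / a).toReal) = f x / a := fun x =>
    ENNReal.ofReal_toReal (ENNReal.div_ne_top (ne_top_of_le_ne_top ENNReal.coe_ne_top (fa x))
      (by simpa using a0))
  have e2 : ∀ x, ENNReal.ofReal ((g x / b).toReal) = g x / b := fun x =>
    ENNReal.ofReal_toReal (ENNReal.div_ne_top (ne_top_of_le_ne_top ENNReal.coe_ne_top (gb x))
      (by simpa using b0))
  have e3 : ∀ x, ENNReal.ofReal ((min (h x) c / c).toReal) = min (h x) c / c := fun x =>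
    ENNReal.ofReal_toReal (ENNReal.div_ne_top
      (ne_top_of_le_ne_top ENNReal.coe_ne_top (min_le_right _ _)) (by simpa using c0.ne'))
  have key := pl_real_norm (f := fun x => (f x / a).toReal) (g := fun x => (g x / b).toReal)
    (h := fun x => (min (h x) c / c).toReal) (by fun_prop) (by fun_prop) (by fun_prop)
    (fun _ => ENNReal.toReal_nonneg) (fun _ => ENNReal.toReal_nonneg)
    (fun _ => ENNReal.toReal_nonneg) ?_ ?_ ?_ ?_ ?_
  · simp only [e1, e2, e3] at key
    have amgm : ∀ x y : ℝ≥0∞, 4 * (x * y) ≤ (x + y) ^ 2 := by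
      intro x y
      wlog hxy : x ≤ y generalizing x y
      · rw [mul_comm x y, add_comm x y]; exact this y x (le_of_not_ge hxy)
      obtain ⟨d, rfl⟩ := exists_add_of_le hxy
      calc 4 * (x * (x + d)) ≤ 4 * (x * (x + d)) + d ^ 2 := le_self_add
        _ = _ := by ring
    have hmin : ∫⁻ x, min (h x) c / c ≤ (∫⁻ x, h x) / c := by
      simp only [div_eq_mul_inv]
      rw [← lintegral_mul_const _ hh]
      exact lintegral_mono fun x => by gcongr; exact min_le_left _ _
    simp only [div_eq_mul_inv] at key hmin
    rw [lintegral_mul_const _ hf, lintegral_mul_const _ hg] at key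
    set F := ∫⁻ x, f x
    set G := ∫⁻ x, g x
    set I := ∫⁻ x, h x
    have k1 : 4 * (F * (a:ℝ≥0∞)⁻¹ * (G * (b:ℝ≥0∞)⁻¹)) ≤ 4 * (I * (c:ℝ≥0∞)⁻¹) ^ 2 :=
      calc _ ≤ (F * (a:ℝ≥0∞)⁻¹ + (G * (b:ℝ≥0∞)⁻¹)) ^ 2 := amgm _ _
        _ ≤ (2 * (I * (c:ℝ≥0∞)⁻¹)) ^ 2 := by
          gcongr
          exact key.trans (by gcongr)
        _ = _ := by ring
    have k2 := (ENNReal.mul_le_mul_iff_right (by norm_num) (by norm_num)).1 k1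
    have a1 : (a:ℝ≥0∞) * (a:ℝ≥0∞)⁻¹ = 1 := ENNReal.mul_inv_cancel (by simpa) (by simp)
    have b1 : (b:ℝ≥0∞) * (b:ℝ≥0∞)⁻¹ = 1 := ENNReal.mul_inv_cancel (by simpa) (by simp)
    have c1 : (c:ℝ≥0∞) * (c:ℝ≥0∞)⁻¹ = 1 := ENNReal.mul_inv_cancel (by simpa using c0.ne') (by simp)
    have c2' : (c:ℝ≥0∞) ^ 2 = a * b := by exact_mod_cast congrArg ENNReal.ofNNReal c2
    calc F * G = ((a:ℝ≥0∞) * (a:ℝ≥0∞)⁻¹) * ((b:ℝ≥0∞) * (b:ℝ≥0∞)⁻¹) * (F * G) := by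
          rw [a1, b1]; simp
      _ = (a * b) * (F * (a:ℝ≥0∞)⁻¹ * (G * (b:ℝ≥0∞)⁻¹)) := by ring
      _ ≤ (a * b) * (I * (c:ℝ≥0∞)⁻¹) ^ 2 := by gcongr
      _ = ((c:ℝ≥0∞) * (c:ℝ≥0∞)⁻¹) ^ 2 * I ^ 2 := by rw [← c2']; ring
      _ = I ^ 2 := by rw [c1]; simp
  · intro x
    refine ENNReal.toReal_le_of_le_ofReal zero_le_one ?_
    rw [ENNReal.ofReal_one]
    exact ENNReal.div_le_of_le_mul (by simpa using fa x)
  · intro x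
    refine ENNReal.toReal_le_of_le_ofReal zero_le_one ?_
    rw [ENNReal.ofReal_one]
    exact ENNReal.div_le_of_le_mul (by simpa using gb x)
  · intro t ht
    rcases lt_or_ge t 0 with h0 | h0
    · exact ⟨0, h0.trans_le ENNReal.toReal_nonneg⟩
    have : ENNReal.ofReal t * a < ⨆ x, f x := by
      rw [← ha]
      conv_rhs => rw [← one_mul (a:ℝ≥0∞)]
      exact ENNReal.mul_lt_mul_left (by simpa using a0) (by simp) (by simpa using ht)
    obtain ⟨x, hx⟩ := lt_iSup_iff.1 this
    refine ⟨x, ?_⟩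
    rw [← ENNReal.ofReal_lt_ofReal_iff_of_nonneg h0, e1]
    exact (ENNReal.lt_div_iff_mul_lt (by simp [a0]) (by simp)).2 hx
  · intro t ht
    rcases lt_or_ge t 0 with h0 | h0
    · exact ⟨0, h0.trans_le ENNReal.toReal_nonneg⟩
    have : ENNReal.ofReal t * b < ⨆ x, g x := by
      rw [← hb]
      conv_rhs => rw [← one_mul (b:ℝ≥0∞)]
      exact ENNReal.mul_lt_mul_left (by simpa using b0) (by simp) (by simpa using ht)
    obtain ⟨x, hx⟩ := lt_iSup_iff.1 this
    refine ⟨x, ?_⟩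
    rw [← ENNReal.ofReal_lt_ofReal_iff_of_nonneg h0, e2]
    exact (ENNReal.lt_div_iff_mul_lt (by simp [b0]) (by simp)).2 hx
  · intro x y
    have Hxy := H x y
    have hxy : (1 / 2 : ℝ) • (x + y) = (x + y) / 2 := by simp; ring
    rw [hxy] at Hxy
    set z := (x + y) / 2
    have fx : f x ≠ ∞ := ne_top_of_le_ne_top ENNReal.coe_ne_top (fa x)
    have gy : g y ≠ ∞ := ne_top_of_le_ne_top ENNReal.coe_ne_top (gb y)
    simp only [ENNReal.toReal_div, ENNReal.coe_toReal]
    have fa' : (f x).toReal ≤ a := by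
      simpa using ENNReal.toReal_mono ENNReal.coe_ne_top (fa x)
    have gb' : (g y).toReal ≤ b := by
      simpa using ENNReal.toReal_mono ENNReal.coe_ne_top (gb y)
    have a0r : (0:ℝ) < a := a0'
    have b0r : (0:ℝ) < b := b0'
    have c0r : (0:ℝ) < c := c0
    rcases le_total (c : ℝ≥0∞) (h z) with hcz | hcz
    · rw [min_eq_right hcz]
      simp only [ENNReal.coe_toReal]
      rw [div_self c0r.ne']
      exact (min_le_left _ _).trans ((div_le_one a0r).2 fa')
    · rw [min_eq_left hcz]
      have hz : h z ≠ ∞ := ne_top_of_le_ne_top ENNReal.coe_ne_top hcz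
      have Hr : (f x).toReal * (g y).toReal ≤ (h z).toReal ^ 2 := by
        rw [← ENNReal.toReal_mul, ← ENNReal.toReal_pow]
        exact ENNReal.toReal_mono (by simp [hz]) Hxy
      have c2r : (c:ℝ) ^ 2 = a * b := by exact_mod_cast c2
      refine le_of_sq_le_sq ?_ (by positivity)
      calc _ ≤ (f x).toReal / a * ((g y).toReal / b) := by
            rw [sq]
            exact mul_le_mul (min_le_left _ _) (min_le_right _ _) (by positivity) (by positivity)
        _ = ((f x).toReal * (g y).toReal) / c ^ 2 := by rw [c2r]; field_simp
        _ ≤ (h z).toReal ^ 2 / c ^ 2 := by gcongr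
        _ = _ := by rw [div_pow]

theorem pl_real : PL (volume : Measure ℝ) := by
  intro f g h hf hg hh H
  have tr : ∀ {k : ℝ → ℝ≥0∞}, Measurable k →
      ∫⁻ x, k x = ⨆ N : ℕ, ∫⁻ x, min (k x) N := by
    intro k hk
    rw [← lintegral_iSup (fun N => hk.min measurable_const)]
    · congr 1 with x
      rw [← inf_iSup_eq, ENNReal.iSup_natCast]; simp
    · intro a b hab x
      exact min_le_min le_rfl (by exact_mod_cast hab)
  rw [tr hf, tr hg]
  rw [ENNReal.iSup_mul]
  refine iSup_le fun N => ?_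
  rw [ENNReal.mul_iSup]
  refine iSup_le fun N' => ?_
  refine pl_real_bdd (hf.min measurable_const) (hg.min measurable_const) hh ?_ ?_ ?_
  · exact ne_top_of_le_ne_top (ENNReal.natCast_ne_top N) (iSup_le fun x => min_le_right _ _)
  · exact ne_top_of_le_ne_top (ENNReal.natCast_ne_top N') (iSup_le fun x => min_le_right _ _)
  · intro x y
    exact (mul_le_mul' (min_le_left _ _) (min_le_left _ _)).trans (H x y)

/-- Prékopa–Leindler tensorises: integrate out the second factor, then apply the real case to the
marginals. -/
theorem pl_prod {E : Type*} [AddCommGroup E] [Module ℝ E] [MeasurableSpace E] {μ : Measure E}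
    [SFinite μ] (hμ : PL μ) : PL ((volume : Measure ℝ).prod μ) := by
  intro f g h hf hg hh H
  rw [lintegral_prod _ hf.aemeasurable, lintegral_prod _ hg.aemeasurable,
    lintegral_prod _ hh.aemeasurable]
  refine pl_real _ _ _ hf.lintegral_prod_right' hg.lintegral_prod_right' hh.lintegral_prod_right'
    fun x y => ?_
  exact hμ _ _ _ (hf.comp measurable_prodMk_left) (hg.comp measurable_prodMk_left)
    (hh.comp measurable_prodMk_left) fun z w => H (x, z) (y, w)

theorem pl_map {E F : Type*} [AddCommGroup E] [Module ℝ E] [MeasurableSpace E]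
    [AddCommGroup F] [Module ℝ F] [MeasurableSpace F] {μ : Measure E} (hμ : PL μ)
    (T : E →ₗ[ℝ] F) (hT : Measurable T) : PL (μ.map T) := by
  intro f g h hf hg hh H
  rw [lintegral_map hf hT, lintegral_map hg hT, lintegral_map hh hT]
  refine hμ _ _ _ (hf.comp hT) (hg.comp hT) (hh.comp hT) fun x y => ?_
  simpa using H (T x) (T y)

theorem pl_smul {E : Type*} [AddCommGroup E] [Module ℝ E] [MeasurableSpace E]
    {μ : Measure E} (hμ : PL μ) (c : ℝ≥0∞) : PL (c • μ) := by
  intro f g h hf hg hh H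
  simp only [lintegral_smul_measure, smul_eq_mul]
  have := hμ f g h hf hg hh H
  calc _ = c ^ 2 * ((∫⁻ x, f x ∂μ) * (∫⁻ x, g x ∂μ)) := by ring
    _ ≤ c ^ 2 * (∫⁻ x, h x ∂μ) ^ 2 := by gcongr
    _ = _ := by ring

theorem pl_pi (n : ℕ) : PL (volume : Measure (Fin n → ℝ)) := by
  induction n with
  | zero =>
    intro f g h hf hg hh H
    have : (volume : Measure (Fin 0 → ℝ)) = Measure.dirac 0 := by
      rw [volume_pi, Measure.pi_of_empty _ 0]
    rw [this, lintegral_dirac' _ hf, lintegral_dirac' _ hg, lintegral_dirac' _ hh]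
    simpa using H 0 0
  | succ n ih =>
    have h1 := (volume_preserving_piFinSuccAbove (fun _ : Fin (n + 1) => ℝ) 0).symm
    let T : (ℝ × (Fin n → ℝ)) →ₗ[ℝ] (Fin (n + 1) → ℝ) :=
      { toFun := (MeasurableEquiv.piFinSuccAbove (fun _ : Fin (n + 1) => ℝ) 0).symm
        map_add' := by
          intro x y; ext i
          refine Fin.cases ?_ (fun j => ?_) i <;> simp [MeasurableEquiv.piFinSuccAbove]
        map_smul' := by
          intro c y; ext i
          refine Fin.cases ?_ (fun j => ?_) i <;> simp [MeasurableEquiv.piFinSuccAbove] }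
    have h2 := pl_map (pl_prod ih) T (MeasurableEquiv.measurable _)
    rw [← h1.map_eq]
    exact h2

/-- Prékopa–Leindler for every Haar measure on a finite-dimensional real vector space. -/
theorem pl_haar {E : Type*} [NormedAddCommGroup E] [NormedSpace ℝ E] [FiniteDimensional ℝ E]
    [MeasurableSpace E] [BorelSpace E] (μ : Measure E) [μ.IsAddHaarMeasure] : PL μ := by
  let T : (Fin (Module.finrank ℝ E) → ℝ) ≃L[ℝ] E :=
    (ContinuousLinearEquiv.ofFinrankEq (by simp))
  have h1 : PL ((volume : Measure (Fin (Module.finrank ℝ E) → ℝ)).map T) :=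
    pl_map (pl_pi _) T.toLinearEquiv.toLinearMap T.continuous.measurable
  have := T.isAddHaarMeasure_map (volume : Measure (Fin (Module.finrank ℝ E) → ℝ))
  rw [Measure.isAddLeftInvariant_eq_smul μ ((volume : Measure (Fin (Module.finrank ℝ E) → ℝ)).map T)]
  exact pl_smul h1 _

/-! ### Anticoncentration of linear functionals on convex bodies -/

section Anti
variable {E : Type*} [NormedAddCommGroup E] [NormedSpace ℝ E] [FiniteDimensional ℝ E]
  [MeasurableSpace E] [BorelSpace E] {μ : Measure E} [μ.IsAddHaarMeasure]
  {P : Set E} {ℓ : E →ₗ[ℝ] ℝ} {s : ℝ}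

/-- If one of two points of `P` has slack at least `2 * t`, their midpoint has slack at least `t`;
Prékopa–Leindler for the corresponding indicator functions gives the inequality. -/
theorem bm_slab (hP : Convex ℝ P) (hPm : MeasurableSet P) (hY : ∀ x ∈ P, ℓ x ≤ s) (t : ℝ) :
    μ P * μ (P ∩ {x | 2 * t ≤ s - ℓ x}) ≤ μ (P ∩ {x | t ≤ s - ℓ x}) ^ 2 := by
  have hℓ : Measurable ℓ := (LinearMap.continuous_of_finiteDimensional ℓ).measurable
  have hm : ∀ t : ℝ, MeasurableSet (P ∩ {x | t ≤ s - ℓ x}) := fun t =>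
    hPm.inter (measurableSet_le measurable_const (measurable_const.sub hℓ))
  have := pl_haar μ (P.indicator 1) ((P ∩ {x | 2 * t ≤ s - ℓ x}).indicator 1)
    ((P ∩ {x | t ≤ s - ℓ x}).indicator 1) (measurable_one.indicator hPm)
    (measurable_one.indicator (hm _)) (measurable_one.indicator (hm _)) ?_
  · simpa only [lintegral_indicator_one hPm, lintegral_indicator_one (hm _)] using this
  intro x y
  by_cases hx : x ∈ P
  · by_cases hy : y ∈ P ∩ {x | 2 * t ≤ s - ℓ x}
    · have : (1 / 2 : ℝ) • (x + y) ∈ P ∩ {x | t ≤ s - ℓ x} := by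
        constructor
        · rw [smul_add]
          exact hP hx hy.1 (by norm_num) (by norm_num) (by norm_num)
        · have h1 := hY x hx
          have h2 : 2 * t ≤ s - ℓ y := hy.2
          simp only [Set.mem_ofPred_eq, map_smul, map_add, smul_eq_mul]
          linarith
      rw [Set.indicator_of_mem hx, Set.indicator_of_mem hy, Set.indicator_of_mem this]; simp
    · simp [hy]
  · simp [hx]

/-- Exponential decay of the tail of the slack, by iterating `bm_slab`. -/
theorem bm_iter (hP : Convex ℝ P) (hPm : MeasurableSet P) (hfin : μ P ≠ ∞) (hpos : μ P ≠ 0)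
    (hY : ∀ x ∈ P, ℓ x ≤ s) (t : ℝ) (k : ℕ) :
    μ.real (P ∩ {x | 2 ^ k * t ≤ s - ℓ x}) / μ.real P ≤
      (μ.real (P ∩ {x | t ≤ s - ℓ x}) / μ.real P) ^ 2 ^ k := by
  have hm : 0 < μ.real P := ENNReal.toReal_pos hpos hfin
  have step : ∀ t : ℝ, μ.real (P ∩ {x | 2 * t ≤ s - ℓ x}) / μ.real P ≤
      (μ.real (P ∩ {x | t ≤ s - ℓ x}) / μ.real P) ^ 2 := by
    intro t
    have h := bm_slab (μ := μ) hP hPm hY t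
    have h' := ENNReal.toReal_mono (ENNReal.pow_ne_top (measure_ne_top_of_subset
      Set.inter_subset_left hfin)) h
    rw [ENNReal.toReal_mul, ENNReal.toReal_pow] at h'
    change μ.real P * μ.real _ ≤ μ.real _ ^ 2 at h'
    rw [div_pow, div_le_div_iff₀ hm (by positivity)]
    nlinarith
  induction k with
  | zero => simp
  | succ k ih =>
    have e : (2:ℝ) ^ (k + 1) * t = 2 * (2 ^ k * t) := by ring
    rw [e]
    calc _ ≤ _ := step _
      _ ≤ ((μ.real (P ∩ {x | t ≤ s - ℓ x}) / μ.real P) ^ 2 ^ k) ^ 2 := by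
        gcongr
      _ = _ := by rw [← pow_mul, pow_succ]

/-- If a mean slack of at least `s` coexists with a tail of at most `1 / 8` at `T`, then `s ≤ 2 * T`:
the tail at `2 ^ i * T` is at most `8⁻¹ ^ 2 ^ i`, which is summed over dyadic scales. -/
theorem mean_le (hP : Convex ℝ P) (hPm : MeasurableSet P) (hfin : μ P ≠ ∞) (hpos : μ P ≠ 0)
    (hY : ∀ x ∈ P, ℓ x ≤ s) (hs : 0 < s)
    (hmean : ENNReal.ofReal s * μ P ≤ ∫⁻ x in P, ENNReal.ofReal (s - ℓ x) ∂μ)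
    {T : ℝ} (hT : 0 < T) (h8 : μ.real (P ∩ {x | T ≤ s - ℓ x}) / μ.real P ≤ 1 / 8) :
    s ≤ 2 * T := by
  have hℓ : Measurable ℓ := (LinearMap.continuous_of_finiteDimensional ℓ).measurable
  have hm : 0 < μ.real P := ENNReal.toReal_pos hpos hfin
  have hms : ∀ t : ℝ, MeasurableSet {x | t ≤ s - ℓ x} := fun t =>
    measurableSet_le measurable_const (measurable_const.sub hℓ)
  have pt : ∀ x, ENNReal.ofReal (s - ℓ x) ≤ ENNReal.ofReal T +
      ∑' i : ℕ, {x | 2 ^ i * T ≤ s - ℓ x}.indicator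
        (fun _ => ENNReal.ofReal (2 * (2 ^ i * T))) x := by
    intro x
    rcases lt_or_ge (s - ℓ x) T with h | h
    · exact (ENNReal.ofReal_le_ofReal h.le).trans le_self_add
    obtain ⟨i, hi1, hi2⟩ := exists_nat_pow_near (x := (s - ℓ x) / T) (y := 2)
      ((one_le_div hT).2 h) (by norm_num)
    rw [le_div_iff₀ hT] at hi1
    rw [div_lt_iff₀ hT] at hi2
    refine le_trans ?_ (le_add_left (ENNReal.le_tsum i))
    have hmem : x ∈ {x | 2 ^ i * T ≤ s - ℓ x} := hi1
    rw [Set.indicator_of_mem hmem]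
    apply ENNReal.ofReal_le_ofReal
    rw [pow_succ] at hi2
    linarith
  have key : ENNReal.ofReal s * μ P ≤ ENNReal.ofReal (2 * T * μ.real P) := by
    refine hmean.trans ((lintegral_mono pt).trans ?_)
    rw [lintegral_add_left measurable_const, lintegral_tsum
      (fun i => (measurable_const.indicator (hms _)).aemeasurable)]
    have term : ∀ i : ℕ, ∫⁻ x in P, {x | 2 ^ i * T ≤ s - ℓ x}.indicator
        (fun _ => ENNReal.ofReal (2 * (2 ^ i * T))) x ∂μ ≤
        ENNReal.ofReal (T * μ.real P / 4 * (1 / 4) ^ i) := by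
      intro i
      rw [lintegral_indicator (hms _), lintegral_const, Measure.restrict_restrict (hms _),
        Measure.restrict_apply_univ, Set.inter_comm]
      rw [← ENNReal.ofReal_toReal (measure_ne_top_of_subset Set.inter_subset_left hfin :
        μ (P ∩ {x | 2 ^ i * T ≤ s - ℓ x}) ≠ ∞), ← ENNReal.ofReal_mul (by positivity)]
      apply ENNReal.ofReal_le_ofReal
      have h1 := bm_iter (μ := μ) hP hPm hfin hpos hY T i
      have h2 : (μ.real (P ∩ {x | T ≤ s - ℓ x}) / μ.real P) ^ 2 ^ i ≤ (1 / 8) ^ (i + 1) := by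
        calc _ ≤ (1 / 8 : ℝ) ^ 2 ^ i := by gcongr
          _ ≤ _ := pow_le_pow_of_le_one (by norm_num) (by norm_num) Nat.lt_two_pow_self
      have h3 := h1.trans h2
      rw [div_le_iff₀ hm] at h3
      change 2 * (2 ^ i * T) * μ.real (P ∩ {x | 2 ^ i * T ≤ s - ℓ x}) ≤ _
      calc _ ≤ 2 * (2 ^ i * T) * ((1 / 8) ^ (i + 1) * μ.real P) := by gcongr
        _ = T * μ.real P / 4 * (2 ^ i * (1 / 8) ^ i) := by ring
        _ = _ := by rw [← mul_pow]; norm_num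
    calc _ ≤ ENNReal.ofReal T * ENNReal.ofReal (μ.real P)
          + ∑' i : ℕ, ENNReal.ofReal (T * μ.real P / 4 * (1 / 4) ^ i) := by
          gcongr with i
          · simp [ENNReal.ofReal_toReal hfin, Measure.real]
          · exact term i
      _ = ENNReal.ofReal (T * μ.real P) + ENNReal.ofReal (∑' i : ℕ, T * μ.real P / 4 * (1 / 4) ^ i) := by
          rw [← ENNReal.ofReal_mul hT.le, ENNReal.ofReal_tsum_of_nonneg]
          · intro i; positivity
          · exact (summable_geometric_of_lt_one (by norm_num) (by norm_num)).mul_left _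
      _ ≤ _ := by
          rw [tsum_mul_left, tsum_geometric_of_lt_one (by norm_num) (by norm_num),
            ← ENNReal.ofReal_add (by positivity) (by positivity)]
          apply ENNReal.ofReal_le_ofReal
          nlinarith [mul_pos hT hm]
  rw [← ENNReal.ofReal_toReal hfin, ← ENNReal.ofReal_mul hs.le,
    ENNReal.ofReal_le_ofReal_iff (by positivity)] at key
  exact le_of_mul_le_mul_right key hm

/-- A linear functional whose mean slack on a convex body is at least `s` has slack below
`s / 1024` on at most `1 / 64` of the volume. -/
theorem anticonc (hP : Convex ℝ P) (hPm : MeasurableSet P) (hfin : μ P ≠ ∞)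
    (hY : ∀ x ∈ P, ℓ x ≤ s) (hs : 0 < s)
    (hmean : ENNReal.ofReal s * μ P ≤ ∫⁻ x in P, ENNReal.ofReal (s - ℓ x) ∂μ) :
    μ (P ∩ {x | s - ℓ x < s / 1024}) ≤ ENNReal.ofReal (1 / 64) * μ P := by
  rcases eq_or_ne (μ P) 0 with h0 | hpos
  · exact (measure_mono Set.inter_subset_left).trans (by simp [h0])
  have hm : 0 < μ.real P := ENNReal.toReal_pos hpos hfin
  have hℓ : Measurable ℓ := (LinearMap.continuous_of_finiteDimensional ℓ).measurable
  have h8 : 1 / 8 < μ.real (P ∩ {x | 2 ^ 8 * (s / 1024) ≤ s - ℓ x}) / μ.real P := by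
    by_contra! hcon
    have := mean_le hP hPm hfin hpos hY hs hmean (by positivity) hcon
    linarith
  have h1 := h8.trans_le (bm_iter (μ := μ) hP hPm hfin hpos hY (s / 1024) 8)
  set a := μ.real (P ∩ {x | s / 1024 ≤ s - ℓ x}) / μ.real P with ha
  have ha' : 63 / 64 ≤ a := by
    by_contra! hcon
    have : a ^ 2 ^ 8 ≤ (63 / 64 : ℝ) ^ 2 ^ 8 := by gcongr
    have h3 : (63 / 64 : ℝ) ^ 2 ^ 8 ≤ 1 / 8 := by norm_num
    linarith
  rw [ha, le_div_iff₀ hm] at ha'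
  have hsplit : μ.real (P ∩ {x | s - ℓ x < s / 1024}) +
      μ.real (P ∩ {x | s / 1024 ≤ s - ℓ x}) = μ.real P := by
    have hc : MeasurableSet {x | s - ℓ x < s / 1024} :=
      measurableSet_lt (measurable_const.sub hℓ) measurable_const
    have := measureReal_inter_add_sdiff (μ := μ) (s := P) hc hfin
    rw [← this]
    congr 2
    ext x; simp
  rw [← ENNReal.ofReal_toReal hfin, ← ENNReal.ofReal_mul (by norm_num)]
  refine (ENNReal.le_ofReal_iff_toReal_le (measure_ne_top_of_subset Set.inter_subset_left hfin)
    (by positivity)).2 ?_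
  change μ.real _ ≤ 1 / 64 * μ.real P
  linarith
end Anti

/-! ### Volume of swept sets -/

section Tube

/-- A fine cover that nearly realises the Hausdorff measure of `F`.  The radii `ρ i` bounding the
diameters are made positive, so that one can divide by them. -/
theorem exists_good_cover {E : Type*} [NormedAddCommGroup E] [MeasurableSpace E] [BorelSpace E]
    (F : Set E) {p : ℕ} (hp : 1 ≤ p) (hM : μH[(p : ℝ)] F ≠ ∞) {r : ℝ}
    (hr : 0 < r) : ∃ (t : ℕ → Set E) (ρ : ℕ → ℝ), F ⊆ ⋃ i, t i ∧
      (∀ i, 0 < ρ i ∧ ρ i ≤ 2 * r ∧ Metric.ediam (t i) ≤ ENNReal.ofReal (ρ i)) ∧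
      ∑' i, ENNReal.ofReal (ρ i ^ p) ≤ μH[(p : ℝ)] F + ENNReal.ofReal (2 * r) := by
  have hr' : 0 < ENNReal.ofReal r := ENNReal.ofReal_pos.2 hr
  have h1 : (⨅ (t : ℕ → Set E) (_ : F ⊆ ⋃ n, t n)
      (_ : ∀ n, Metric.ediam (t n) ≤ ENNReal.ofReal r),
      ∑' n, ⨆ _ : (t n).Nonempty, Metric.ediam (t n) ^ (p : ℝ)) <
        μH[(p : ℝ)] F + ENNReal.ofReal r := by
    refine lt_of_le_of_lt ?_ (ENNReal.lt_add_right hM hr'.ne')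
    conv_rhs => rw [Measure.hausdorffMeasure_apply]
    exact le_iSup₂ (f := fun (r : ℝ≥0∞) (_ : 0 < r) => ⨅ (t : ℕ → Set E) (_ : F ⊆ ⋃ n, t n)
      (_ : ∀ n, Metric.ediam (t n) ≤ r),
      ∑' n, ⨆ _ : (t n).Nonempty, Metric.ediam (t n) ^ (p : ℝ)) _ hr'
  simp only [iInf_lt_iff] at h1
  obtain ⟨t, hcov, hdiam, hsum⟩ := h1
  obtain ⟨ε, hε, hεsum⟩ := ENNReal.exists_pos_sum_of_countable (ε := ENNReal.ofReal r) hr'.ne' ℕ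
  have hch : ∀ i, ∃ ρ : ℝ, 0 < ρ ∧ ρ ≤ 2 * r ∧ Metric.ediam (t i) ≤ ENNReal.ofReal ρ ∧
      ENNReal.ofReal (ρ ^ p) ≤ (⨆ _ : (t i).Nonempty, Metric.ediam (t i) ^ (p : ℝ)) + ε i := by
    intro i
    set d := (Metric.ediam (t i)).toReal with hd
    have hfin : Metric.ediam (t i) ≠ ∞ := ne_top_of_le_ne_top ENNReal.ofReal_ne_top (hdiam i)
    have hd0 : 0 ≤ d := ENNReal.toReal_nonneg
    have hdr : d < 2 * r := by
      have : d ≤ r := ENNReal.toReal_le_of_le_ofReal hr.le (hdiam i)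
      linarith
    have hε' : (0 : ℝ) < ε i := hε i
    have hc : Tendsto (fun ρ : ℝ => ρ ^ p) (nhdsWithin d (Set.Ioi d)) (nhds (d ^ p)) :=
      ((continuous_pow p).tendsto d).mono_left nhdsWithin_le_nhds
    have e1 := hc.eventually_lt_const (show d ^ p < d ^ p + ε i by linarith)
    have e2 : ∀ᶠ ρ in nhdsWithin d (Set.Ioi d), ρ < 2 * r :=
      nhdsWithin_le_nhds (Iio_mem_nhds hdr)
    have e3 : ∀ᶠ ρ in nhdsWithin d (Set.Ioi d), d < ρ := self_mem_nhdsWithin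
    obtain ⟨ρ, h1, h2, h3⟩ := (e1.and (e2.and e3)).exists
    refine ⟨ρ, by linarith, h2.le, ?_, ?_⟩
    · rw [← ENNReal.ofReal_toReal hfin]
      exact ENNReal.ofReal_le_ofReal h3.le
    · calc ENNReal.ofReal (ρ ^ p) ≤ ENNReal.ofReal (d ^ p + ε i) :=
            ENNReal.ofReal_le_ofReal h1.le
        _ = Metric.ediam (t i) ^ (p : ℝ) + ε i := by
            rw [ENNReal.ofReal_add (by positivity) hε'.le, ENNReal.ofReal_pow hd0,
              ENNReal.ofReal_toReal hfin, ENNReal.rpow_natCast, ENNReal.ofReal_coe_nnreal]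
        _ ≤ _ := by
            gcongr
            rcases (t i).eq_empty_or_nonempty with h | h
            · have : ((p : ℝ)) ≠ 0 := by positivity
              rw [h, Metric.ediam_empty, ENNReal.zero_rpow_of_pos (by positivity)]
              exact zero_le
            · exact le_iSup (fun _ : (t i).Nonempty => Metric.ediam (t i) ^ (p : ℝ)) h
  choose ρ h1 h2 h3 h4 using hch
  refine ⟨t, ρ, hcov, fun i => ⟨h1 i, h2 i, h3 i⟩, ?_⟩
  calc _ ≤ ∑' i, ((⨆ _ : (t i).Nonempty, Metric.ediam (t i) ^ (p : ℝ)) + (ε i : ℝ≥0∞)) :=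
        ENNReal.tsum_le_tsum h4
    _ ≤ (μH[(p : ℝ)] F + ENNReal.ofReal r) + ENNReal.ofReal r := by
        rw [ENNReal.tsum_add]
        exact add_le_add hsum.le hεsum.le
    _ = _ := by rw [add_assoc, ← ENNReal.ofReal_add hr.le hr.le, two_mul]

variable {E : Type*} [NormedAddCommGroup E] [InnerProductSpace ℝ E]

/-- The set swept out by `F` when it is translated along the segment from `0` to `w`. -/
def sweep (F : Set E) (w : E) : Set E := (fun z : E × ℝ => z.1 + z.2 • w) '' (F ×ˢ Set.Icc 0 1)

theorem sqrt_pow_le_two (D : ℕ) (hD : 1 ≤ D) : √(1 + 1 / (D : ℝ)) ^ D ≤ 2 := by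
  have hD' : (0 : ℝ) < D := by exact_mod_cast hD
  have h : (√(1 + 1 / (D : ℝ)) ^ D) ^ 2 ≤ 2 ^ 2 := by
    rw [← pow_mul, mul_comm, pow_mul, Real.sq_sqrt (by positivity)]
    calc (1 + 1 / (D : ℝ)) ^ D ≤ (Real.exp (1 / D)) ^ D := by
          gcongr
          linarith [Real.add_one_le_exp (1 / (D : ℝ))]
      _ = Real.exp 1 := by rw [← Real.exp_nat_mul]; congr 1; field_simp
      _ ≤ _ := by linarith [Real.exp_one_lt_d9]
  exact le_of_sq_le_sq h (by norm_num)

variable [MeasurableSpace E] [BorelSpace E]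

/-- Volume of a right cylinder in the Hausdorff normalisation.  Each piece of a cover of the base,
of diameter at most `ρ`, is cut into slices of height `ρ / √(p + 1)`; these have diameter at most
`ρ * √(1 + 1 / (p + 1))`, and the loss in the power `p + 1` is at most `2` by `sqrt_pow_le_two`. -/
theorem sweep_orth_le (F : Set E) (w : E) {p : ℕ} (hp : 1 ≤ p)
    (horth : ∀ x ∈ F, ∀ y ∈ F, inner ℝ (x - y) w = 0) :
    μH[((p + 1 : ℕ) : ℝ)] (sweep F w) ≤
      ENNReal.ofReal (2 * √((p + 1 : ℕ) : ℝ) * ‖w‖) * μH[(p : ℝ)] F ∨ μH[(p : ℝ)] F = ∞ := by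
  by_cases hM : μH[(p : ℝ)] F = ∞
  · exact Or.inr hM
  left
  set D : ℕ := p + 1 with hD
  have hD0 : (0 : ℝ) < D := by positivity
  have hch := fun k : ℕ => exists_good_cover F hp hM (r := 1 / ((k : ℝ) + 1)) (by positivity)
  choose t ρ hcov hρ hsum using hch
  set N : ℕ → ℕ → ℕ := fun k i => ⌊‖w‖ * √D / ρ k i⌋₊ + 1 with hN
  set T : ∀ k : ℕ, (Σ i : ℕ, Fin (N k i)) → Set E := fun k z =>
    (fun y : E × ℝ => y.1 + y.2 • w) ''
      ((t k z.1 ∩ F) ×ˢ Set.Icc ((z.2 : ℝ) / N k z.1) (((z.2 : ℝ) + 1) / N k z.1)) with hT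
  have hNpos : ∀ k i, (0 : ℝ) < N k i := fun k i => by simp only [hN]; positivity
  have hNle : ∀ k i, ‖w‖ / N k i ≤ ρ k i * √(1 / D) := by
    intro k i
    have hr := (hρ k i).1
    have h1 : ‖w‖ * √D / ρ k i ≤ N k i := by
      simp only [hN]; push_cast; exact (Nat.lt_floor_add_one _).le
    rw [div_le_iff₀ hr] at h1
    rw [div_le_iff₀ (hNpos k i), Real.sqrt_div zero_le_one, Real.sqrt_one, mul_assoc,
      mul_comm (1 / √(D : ℝ)), ← mul_assoc, mul_one_div, le_div_iff₀ (by positivity)]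
    linarith
  have hdiam : ∀ k z, Metric.ediam (T k z) ≤ ENNReal.ofReal (ρ k z.1 * √(1 + 1 / (D : ℝ))) := by
    intro k z
    have hr := (hρ k z.1).1
    refine Metric.ediam_le ?_
    rintro _ ⟨⟨x, a⟩, ⟨⟨hx, hxF⟩, ha⟩, rfl⟩ _ ⟨⟨y, b⟩, ⟨⟨hy, hyF⟩, hb⟩, rfl⟩
    rw [edist_dist]
    apply ENNReal.ofReal_le_ofReal
    simp only
    have hxy : ‖x - y‖ ≤ ρ k z.1 := by
      have := (Metric.edist_le_ediam_of_mem hx hy).trans (hρ k z.1).2.2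
      rw [edist_dist, ENNReal.ofReal_le_ofReal_iff hr.le, dist_eq_norm] at this
      exact this
    have hab : |a - b| ≤ 1 / N k z.1 := by
      have hn := hNpos k z.1
      have e : ((z.2 : ℝ) + 1) / N k z.1 = (z.2 : ℝ) / N k z.1 + 1 / N k z.1 := by ring
      obtain ⟨ha1, ha2⟩ := ha
      obtain ⟨hb1, hb2⟩ := hb
      simp only [e] at ha1 ha2 hb1 hb2
      rw [abs_le]; constructor <;> linarith
    have habw : ‖(a - b) • w‖ ≤ ρ k z.1 * √(1 / D) := by
      rw [norm_smul, Real.norm_eq_abs]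
      calc _ ≤ 1 / N k z.1 * ‖w‖ := by gcongr
        _ = ‖w‖ / N k z.1 := by ring
        _ ≤ _ := hNle _ _
    have e : x + a • w - (y + b • w) = (x - y) + (a - b) • w := by rw [sub_smul]; abel
    rw [dist_eq_norm, e]
    apply le_of_sq_le_sq _ (by positivity)
    have hpy : ‖(x - y) + (a - b) • w‖ ^ 2 = ‖x - y‖ ^ 2 + ‖(a - b) • w‖ ^ 2 := by
      have := norm_add_sq_eq_norm_sq_add_norm_sq_of_inner_eq_zero (x - y) ((a - b) • w)
        (by rw [inner_smul_right, horth x hxF y hyF, mul_zero])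
      simpa only [sq] using this
    rw [hpy, mul_pow, Real.sq_sqrt (by positivity)]
    have h1 : ‖x - y‖ ^ 2 ≤ ρ k z.1 ^ 2 := by gcongr
    have h2 : ‖(a - b) • w‖ ^ 2 ≤ (ρ k z.1 * √(1 / D)) ^ 2 := by gcongr
    rw [mul_pow, Real.sq_sqrt (by positivity)] at h2
    linarith
  have hk0 : Tendsto (fun k : ℕ => 1 / ((k : ℝ) + 1)) atTop (nhds 0) :=
    tendsto_one_div_add_atTop_nhds_zero_nat
  have hbound : ∀ k, ∑' z, Metric.ediam (T k z) ^ ((D : ℕ) : ℝ) ≤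
      ENNReal.ofReal (2 * (‖w‖ * √D + 2 * (1 / ((k : ℝ) + 1)))) *
        (μH[(p : ℝ)] F + ENNReal.ofReal (2 * (1 / ((k : ℝ) + 1)))) := by
    intro k
    rw [ENNReal.tsum_sigma']
    calc _ ≤ ∑' i, ENNReal.ofReal (2 * (‖w‖ * √D + 2 * (1 / ((k : ℝ) + 1)))) *
          ENNReal.ofReal (ρ k i ^ p) := by
          refine ENNReal.tsum_le_tsum fun i => ?_
          have hr := (hρ k i).1
          have hpt : ∀ j : Fin (N k i), Metric.ediam (T k ⟨i, j⟩) ^ ((D : ℕ) : ℝ) ≤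
              ENNReal.ofReal (ρ k i ^ D * 2) := by
            intro j
            rw [ENNReal.rpow_natCast]
            calc _ ≤ ENNReal.ofReal (ρ k i * √(1 + 1 / (D : ℝ))) ^ D := by
                  gcongr; exact hdiam k ⟨i, j⟩
              _ = ENNReal.ofReal (ρ k i ^ D * √(1 + 1 / (D : ℝ)) ^ D) := by
                  rw [← ENNReal.ofReal_pow (by positivity), mul_pow]
              _ ≤ _ := by
                  apply ENNReal.ofReal_le_ofReal
                  gcongr
                  exact sqrt_pow_le_two D (by omega)
          calc _ ≤ ∑' j : Fin (N k i), ENNReal.ofReal (ρ k i ^ D * 2) := ENNReal.tsum_le_tsum hpt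
            _ = ENNReal.ofReal (N k i * (ρ k i ^ D * 2)) := by
                rw [tsum_fintype, Finset.sum_const, Finset.card_univ, Fintype.card_fin,
                  nsmul_eq_mul, ENNReal.ofReal_mul (p := (N k i : ℝ)) (Nat.cast_nonneg _),
                  ENNReal.ofReal_natCast]
            _ ≤ _ := by
                rw [← ENNReal.ofReal_mul (by positivity)]
                apply ENNReal.ofReal_le_ofReal
                have h1 : (N k i : ℝ) ≤ ‖w‖ * √D / ρ k i + 1 := by
                  simp only [hN]; push_cast
                  gcongr
                  exact Nat.floor_le (by positivity)
                have h2 : (N k i : ℝ) * ρ k i ≤ ‖w‖ * √D + ρ k i := by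
                  calc _ ≤ (‖w‖ * √D / ρ k i + 1) * ρ k i := by gcongr
                    _ = _ := by field_simp
                calc _ = 2 * ((N k i : ℝ) * ρ k i) * ρ k i ^ p := by rw [hD, pow_succ]; ring
                  _ ≤ _ := by
                    gcongr
                    exact h2.trans (by linarith [(hρ k i).2.1])
      _ ≤ _ := by
          rw [ENNReal.tsum_mul_left]
          gcongr
          exact hsum k
  have hcov' : ∀ k, sweep F w ⊆ ⋃ z, T k z := by
    rintro k _ ⟨⟨x, a⟩, ⟨hx, ha⟩, rfl⟩
    simp only at hx ha
    obtain ⟨i, hi⟩ := Set.mem_iUnion.1 (hcov k hx)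
    have hn := hNpos k i
    have hn' : 0 < N k i := by exact_mod_cast hn
    rw [Set.mem_iUnion]
    rcases eq_or_lt_of_le ha.2 with h1 | h1
    · refine ⟨⟨i, ⟨N k i - 1, by omega⟩⟩, (x, a), ⟨⟨hi, hx⟩, ?_⟩, rfl⟩
      simp only [Nat.cast_sub (show 1 ≤ N k i by omega), Nat.cast_one, sub_add_cancel, h1]
      exact ⟨by rw [div_le_one hn]; linarith, by rw [div_self hn.ne']⟩
    · have h0 : 0 ≤ a * N k i := mul_nonneg ha.1 hn.le
      refine ⟨⟨i, ⟨⌊a * N k i⌋₊, ?_⟩⟩, (x, a), ⟨⟨hi, hx⟩, ?_⟩, rfl⟩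
      · rw [Nat.floor_lt h0]
        nlinarith
      · simp only
        constructor
        · rw [div_le_iff₀ hn]; exact Nat.floor_le h0
        · rw [le_div_iff₀ hn]; exact (Nat.lt_floor_add_one _).le
  have hlim : Tendsto (fun k : ℕ => ENNReal.ofReal (2 * (‖w‖ * √D + 2 * (1 / ((k : ℝ) + 1)))) *
        (μH[(p : ℝ)] F + ENNReal.ofReal (2 * (1 / ((k : ℝ) + 1))))) atTop
      (nhds (ENNReal.ofReal (2 * (‖w‖ * √D + 2 * 0)) * (μH[(p : ℝ)] F + ENNReal.ofReal (2 * 0)))) := by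
    refine ENNReal.Tendsto.mul ?_ (Or.inr ?_) ?_ (Or.inr ENNReal.ofReal_ne_top)
    · exact ENNReal.tendsto_ofReal ((tendsto_const_nhds.add (hk0.const_mul 2)).const_mul 2)
    · simp [hM]
    · exact tendsto_const_nhds.add (ENNReal.tendsto_ofReal (hk0.const_mul 2))
  calc _ ≤ liminf (fun k => ∑' z, Metric.ediam (T k z) ^ ((D : ℕ) : ℝ)) atTop := by
        refine Measure.hausdorffMeasure_le_liminf_tsum _ _
          (fun k : ℕ => ENNReal.ofReal (2 * (1 / ((k : ℝ) + 1)) * √(1 + 1 / (D : ℝ)))) ?_ T ?_ ?_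
        · have := ENNReal.tendsto_ofReal ((hk0.const_mul 2).mul_const (√(1 + 1 / (D : ℝ))))
          simpa using this
        · refine Eventually.of_forall fun k z => (hdiam k z).trans ?_
          apply ENNReal.ofReal_le_ofReal
          gcongr
          exact (hρ k z.1).2.1
        · exact Eventually.of_forall hcov'
    _ ≤ liminf (fun k : ℕ => ENNReal.ofReal (2 * (‖w‖ * √D + 2 * (1 / ((k : ℝ) + 1)))) *
        (μH[(p : ℝ)] F + ENNReal.ofReal (2 * (1 / ((k : ℝ) + 1))))) atTop :=
        liminf_le_liminf (Eventually.of_forall hbound)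
    _ = _ := by
        rw [hlim.liminf_eq]
        simp only [mul_zero, add_zero, ENNReal.ofReal_zero]
        congr 2; ring

/-- Volume of an oblique cylinder over a set in a hyperplane orthogonal to `a`: a transvection of
determinant one turns it into the right cylinder along the component of `u` in the direction `a`. -/
theorem sweep_le [FiniteDimensional ℝ E] {p : ℕ} (hp : 1 ≤ p)
    (hE : Module.finrank ℝ E = p + 1) (F : Set E) (u a : E) {c : ℝ}
    (hF : ∀ x ∈ F, inner ℝ a x = c) (hau : inner ℝ a u ≠ 0) (hM : μH[(p : ℝ)] F ≠ ∞) :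
    μH[((p + 1 : ℕ) : ℝ)] (sweep F u) ≤
      ENNReal.ofReal (2 * √((p + 1 : ℕ) : ℝ) * ‖u‖) * μH[(p : ℝ)] F := by
  have ha : a ≠ 0 := by rintro rfl; simp at hau
  have ha' : 0 < ‖a‖ := norm_pos_iff.2 ha
  set w : E := (inner ℝ a u / ‖a‖ ^ 2) • a with hw
  have haw : inner ℝ a w = inner ℝ a u := by
    rw [hw, inner_smul_right, real_inner_self_eq_norm_sq]; field_simp
  have hwu : ‖w‖ ≤ ‖u‖ := by
    rw [hw, norm_smul, Real.norm_eq_abs, abs_div, abs_of_nonneg (sq_nonneg ‖a‖)]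
    have := abs_real_inner_le_norm a u
    calc |inner ℝ a u| / ‖a‖ ^ 2 * ‖a‖ ≤ (‖a‖ * ‖u‖) / ‖a‖ ^ 2 * ‖a‖ := by gcongr
      _ = ‖u‖ := by field_simp
  have : (μH[((p + 1 : ℕ) : ℝ)] : Measure E).IsAddHaarMeasure := by
    rw [← hE]; infer_instance
  set f : Module.Dual ℝ E := (inner ℝ a u)⁻¹ • (innerₗ E a) with hf
  have hfv : f (u - w) = 0 := by
    simp [hf, innerₗ_apply_apply, inner_sub_right, haw]
  have hdet : LinearMap.det (LinearMap.transvection f (u - w)) = 1 := by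
    rw [LinearMap.transvection.det, hfv, add_zero]
  have himg : sweep F u = (fun y => y + (-(c / inner ℝ a u)) • (u - w)) ''
      (LinearMap.transvection f (u - w) '' sweep F w) := by
    unfold sweep
    rw [Set.image_image, Set.image_image]
    refine Set.image_congr ?_
    rintro ⟨x, τ⟩ ⟨hx, -⟩
    simp only [LinearMap.transvection.apply]
    have : f (x + τ • w) = c / inner ℝ a u + τ := by
      simp only [hf, LinearMap.smul_apply, innerₗ_apply_apply, inner_add_right, inner_smul_right,
        hF x hx, haw, smul_eq_mul]
      field_simp
    rw [this]
    module
  have hmeas : μH[((p + 1 : ℕ) : ℝ)] (sweep F u) = μH[((p + 1 : ℕ) : ℝ)] (sweep F w) := by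
    rw [himg]
    have hiso : Isometry (fun y : E => y + (-(c / inner ℝ a u)) • (u - w)) :=
      (IsometryEquiv.addRight ((-(c / inner ℝ a u)) • (u - w))).isometry
    rw [hiso.hausdorffMeasure_image (Or.inl (Nat.cast_nonneg _)),
      Measure.addHaar_image_linearMap, hdet]
    simp
  rw [hmeas]
  rcases sweep_orth_le F w hp (fun x hx y hy => by
    rw [hw, inner_smul_right, real_inner_comm a (x - y), inner_sub_right, hF x hx, hF y hy, sub_self,
      mul_zero]) with h | h
  · refine h.trans ?_
    gcongr
  · exact absurd h hM

end Tube

/-! ### A lower bound for Hausdorff measure -/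

section Lower

/-- The lower half of the Stirling formula, up to a factor `√x`: restrict the Euler integral to
`(x, ∞)`. -/
theorem rpow_div_exp_le_Gamma {x : ℝ} (hx : 0 < x) : x ^ x * Real.exp (-x) ≤ Real.Gamma (x + 1) := by
  rw [Real.Gamma_eq_integral (by linarith), add_sub_cancel_right]
  have hgam : IntegrableOn (fun t : ℝ => Real.exp (-t) * t ^ x) (Set.Ioi 0) := by
    have := Real.GammaIntegral_convergent (s := x + 1) (by linarith)
    rwa [add_sub_cancel_right] at this
  have hsub : Set.Ioi x ⊆ Set.Ioi (0 : ℝ) := Set.Ioi_subset_Ioi hx.le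
  calc x ^ x * Real.exp (-x) = ∫ t in Set.Ioi x, Real.exp (-t) * x ^ x := by
        rw [integral_mul_const, integral_exp_neg_Ioi, mul_comm]
    _ ≤ ∫ t in Set.Ioi x, Real.exp (-t) * t ^ x := by
        refine setIntegral_mono_on ?_ (hgam.mono_set hsub) measurableSet_Ioi fun t ht => ?_
        · exact (exp_neg_integrableOn_Ioi x one_pos |>.congr_fun
            (fun t _ => by simp) measurableSet_Ioi).mul_const _
        · have ht' : x < t := ht
          gcongr
    _ ≤ _ := by
        refine setIntegral_mono_set hgam ?_ hsub.eventuallyLE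
        filter_upwards [self_mem_ae_restrict measurableSet_Ioi] with t ht
        have ht' : 0 < t := ht
        simp only [Pi.zero_apply]; positivity

theorem volume_unit_ball_le {ι : Type*} [Fintype ι] [Nonempty ι] :
    volume (Metric.ball (0 : EuclideanSpace ℝ ι) 1) ≤
      ENNReal.ofReal ((5 / √(Fintype.card ι)) ^ Fintype.card ι) := by
  rw [EuclideanSpace.volume_ball]
  set m := Fintype.card ι
  have hm : (0 : ℝ) < m := by exact_mod_cast Fintype.card_pos
  rw [ENNReal.ofReal_one, one_pow, one_mul]
  apply ENNReal.ofReal_le_ofReal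
  have h1 := rpow_div_exp_le_Gamma (x := (m : ℝ) / 2) (by positivity)
  set y := √((m : ℝ) / 2) * Real.exp (-(1 / 2)) with hy
  have hy0 : 0 < y := by positivity
  have h2 : ((m : ℝ) / 2) ^ ((m : ℝ) / 2) * Real.exp (-((m : ℝ) / 2)) = y ^ m := by
    rw [hy, mul_pow, ← Real.exp_nat_mul, Real.sqrt_eq_rpow, ← Real.rpow_mul_natCast (by positivity)]
    congr 2 <;> ring
  rw [h2] at h1
  calc √Real.pi ^ m / Real.Gamma (m / 2 + 1) ≤ √Real.pi ^ m / y ^ m := by gcongr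
    _ = (√Real.pi / y) ^ m := by rw [div_pow]
    _ ≤ _ := by
      gcongr ?_ ^ _
      rw [div_le_div_iff₀ hy0 (by positivity), hy]
      apply le_of_sq_le_sq _ (by positivity)
      rw [mul_pow, mul_pow, mul_pow, Real.sq_sqrt Real.pi_pos.le, Real.sq_sqrt hm.le,
        Real.sq_sqrt (by positivity : (0 : ℝ) ≤ (m : ℝ) / 2),
        ← Real.exp_nat_mul]
      have e1 : Real.exp ((2 : ℕ) * -(1 / 2)) = (Real.exp 1)⁻¹ := by
        rw [← Real.exp_neg]; norm_num
      rw [e1]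
      have h3 := Real.exp_one_lt_d9
      have h4 := Real.pi_lt_d2
      have h5 : Real.pi * Real.exp 1 ≤ 25 / 2 := by
        nlinarith [Real.pi_pos, Real.exp_pos 1]
      have h6 : Real.pi ≤ 25 / 2 * (Real.exp 1)⁻¹ := by
        rw [← div_eq_mul_inv, le_div_iff₀ (Real.exp_pos 1)]; exact h5
      nlinarith

/-- Comparison of Lebesgue and Hausdorff measure: a set of diameter `d` lies in a ball of radius
`d`.  The loss of `2 ^ card ι` against the isodiametric inequality is harmless here. -/
theorem volume_le_hausdorff {ι : Type*} [Fintype ι] [Nonempty ι] (A : Set (EuclideanSpace ℝ ι)) :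
    volume A ≤ ENNReal.ofReal ((5 / √(Fintype.card ι)) ^ Fintype.card ι) *
      μH[(Fintype.card ι : ℝ)] A := by
  set m := Fintype.card ι with hm'
  have hm : (0 : ℝ) < m := by exact_mod_cast Fintype.card_pos
  set ω := ENNReal.ofReal ((5 / √m) ^ m) with hω
  have hω0 : ω ≠ 0 := (ENNReal.ofReal_pos.2 (by positivity)).ne'
  have hωt : ω ≠ ∞ := ENNReal.ofReal_ne_top
  have h : ω⁻¹ • (volume : Measure (EuclideanSpace ℝ ι)) ≤ μH[(m : ℝ)] := by
    refine Measure.le_hausdorffMeasure _ _ 1 one_pos fun s hs => ?_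
    rw [Measure.smul_apply, smul_eq_mul, ENNReal.rpow_natCast]
    rcases s.eq_empty_or_nonempty with rfl | ⟨x, hx⟩
    · simp
    have hfin : Metric.ediam s ≠ ∞ := ne_top_of_le_ne_top ENNReal.one_ne_top hs
    have hsub : s ⊆ Metric.closedBall x (Metric.ediam s).toReal := by
      intro y hy
      rw [Metric.mem_closedBall, dist_edist]
      exact ENNReal.toReal_mono hfin (Metric.edist_le_ediam_of_mem hy hx)
    rw [mul_comm, ← div_eq_mul_inv]
    refine ENNReal.div_le_of_le_mul ?_
    calc volume s ≤ _ := measure_mono hsub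
      _ = ENNReal.ofReal ((Metric.ediam s).toReal ^ m) *
          volume (Metric.ball (0 : EuclideanSpace ℝ ι) 1) := by
          rw [Measure.addHaar_closedBall _ _ ENNReal.toReal_nonneg, finrank_euclideanSpace]
      _ ≤ Metric.ediam s ^ m * ω := by
          rw [ENNReal.ofReal_pow ENNReal.toReal_nonneg, ENNReal.ofReal_toReal hfin]
          gcongr
          exact volume_unit_ball_le
  have := h A
  rw [Measure.smul_apply, smul_eq_mul, mul_comm, ← div_eq_mul_inv,
    ENNReal.div_le_iff hω0 hωt] at this
  rwa [mul_comm]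

/-- The map in question is `1 - J / (card ι + 1)` with `J` the all-ones matrix, and has determinant
`1 / (card ι + 1)`. -/
theorem volume_shear_cube {ι : Type*} [Fintype ι] {r : ℝ} (hr : 0 ≤ r) :
    volume ((fun y : EuclideanSpace ℝ ι =>
      (WithLp.toLp 2 fun i => y i - (∑ j, y j) / (Fintype.card ι + 1) : EuclideanSpace ℝ ι)) ''
        {y | ∀ i, y i ∈ Set.Icc 0 r}) =
      ENNReal.ofReal (r ^ Fintype.card ι / (Fintype.card ι + 1)) := by
  set m := Fintype.card ι with hm
  set f : Module.Dual ℝ (EuclideanSpace ℝ ι) :=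
    (-(1 / ((m : ℝ) + 1))) • ∑ j, (EuclideanSpace.proj j : EuclideanSpace ℝ ι →L[ℝ] ℝ).toLinearMap
    with hf
  set o : EuclideanSpace ℝ ι := WithLp.toLp 2 fun _ => 1 with ho
  have hfun : (fun y : EuclideanSpace ℝ ι =>
      (WithLp.toLp 2 fun i => y i - (∑ j, y j) / (m + 1) : EuclideanSpace ℝ ι)) =
      LinearMap.transvection f o := by
    funext y
    ext i
    simp [LinearMap.transvection.apply, hf, ho]
    ring
  have hdet : LinearMap.det (LinearMap.transvection f o) = 1 / ((m : ℝ) + 1) := by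
    rw [LinearMap.transvection.det]
    simp [hf, ho, ← hm]
    field_simp
    ring
  rw [hfun, Measure.addHaar_image_linearMap, hdet, abs_of_nonneg (by positivity)]
  have hcube : volume {y : EuclideanSpace ℝ ι | ∀ i, y i ∈ Set.Icc 0 r} =
      ENNReal.ofReal (r ^ m) := by
    have e : {y : EuclideanSpace ℝ ι | ∀ i, y i ∈ Set.Icc 0 r} =
        WithLp.ofLp ⁻¹' (Set.univ.pi fun _ => Set.Icc 0 r) := by
      ext y; simp only [Set.mem_ofPred_eq, Set.mem_preimage, Set.mem_univ_pi]
    rw [e, (PiLp.volume_preserving_ofLp ι).measure_preimage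
      (MeasurableSet.univ_pi fun _ => measurableSet_Icc).nullMeasurableSet, volume_pi_pi]
    simp [ENNReal.ofReal_pow hr, hm]
  rw [hcube, ← ENNReal.ofReal_mul (by positivity)]
  congr 1; ring

/-- A set that contains the sup-norm ball of radius `r` of the mean-zero hyperplane has
`m`-dimensional measure at least `(r * √m / 10) ^ m`.  Forgetting the coordinate `i0` does not
increase the measure, and the projection contains the cube of side `r`, recentred to mean zero. -/
theorem hausdorff_lower {ι : Type*} [Fintype ι] [DecidableEq ι] (i0 : ι) {m : ℕ} (hm1 : 1 ≤ m)
    (hm : Fintype.card ι = m + 1) {r : ℝ} (hr : 0 ≤ r) (K : Set (EuclideanSpace ℝ ι))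
    (hK : ∀ x : EuclideanSpace ℝ ι, ∑ v, x v = 0 → (∀ v, |x v| ≤ r) → x ∈ K) :
    ENNReal.ofReal ((r * √m / 10) ^ m) ≤ μH[(m : ℝ)] K := by
  have hcard : Fintype.card {v : ι // v ≠ i0} = m := by
    rw [Fintype.card_subtype_compl, Fintype.card_subtype_eq, hm]; rfl
  have hne : Nonempty {v : ι // v ≠ i0} := Fintype.card_pos_iff.1 (by omega)
  have hm0 : (0 : ℝ) < m := by exact_mod_cast hm1
  set π : EuclideanSpace ℝ ι → EuclideanSpace ℝ {v : ι // v ≠ i0} :=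
    fun x => WithLp.toLp 2 fun v => x v with hπ
  have hsum : ∀ g : ι → ℝ, ∑ v, g v = g i0 + ∑ v : {v : ι // v ≠ i0}, g v := by
    intro g
    rw [Fintype.sum_eq_add_sum_subtype_ne g i0]
  have hlip : LipschitzWith 1 π := by
    refine LipschitzWith.of_dist_le_mul fun x y => ?_
    rw [NNReal.coe_one, one_mul, EuclideanSpace.dist_eq, EuclideanSpace.dist_eq]
    apply Real.sqrt_le_sqrt
    rw [hsum]
    have : 0 ≤ dist (x i0) (y i0) ^ 2 := by positivity
    simp only [hπ]
    linarith
  have himg : (fun y : EuclideanSpace ℝ {v : ι // v ≠ i0} =>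
      (WithLp.toLp 2 fun i => y i - (∑ j, y j) / (Fintype.card {v : ι // v ≠ i0} + 1) :
        EuclideanSpace ℝ {v : ι // v ≠ i0})) '' {y | ∀ i, y i ∈ Set.Icc 0 r} ⊆ π '' K := by
    rintro _ ⟨y, hy, rfl⟩
    set c := (∑ j, y j) / (Fintype.card {v : ι // v ≠ i0} + 1) with hc
    have hc0 : 0 ≤ c := div_nonneg (Finset.sum_nonneg fun i _ => (hy i).1) (by positivity)
    have hcr : c ≤ r := by
      rw [hc, div_le_iff₀ (by positivity)]
      calc ∑ j, y j ≤ ∑ j : {v : ι // v ≠ i0}, r := Finset.sum_le_sum fun i _ => (hy i).2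
        _ = Fintype.card {v : ι // v ≠ i0} * r := by simp
        _ ≤ _ := by nlinarith
    refine ⟨WithLp.toLp 2 fun v => if h : v ≠ i0 then y ⟨v, h⟩ - c else - c, hK _ ?_ ?_, ?_⟩
    · rw [hsum]
      simp only [ne_eq, not_true_eq_false, ↓reduceDIte, Subtype.coe_eta]
      have : ∀ v : {v : ι // v ≠ i0}, (if h : (v : ι) ≠ i0 then y ⟨v, h⟩ - c else -c) = y v - c :=
        fun v => by rw [dif_pos v.2]
      simp only [ne_eq] at this
      simp only [this, Finset.sum_sub_distrib, Finset.sum_const, Finset.card_univ, nsmul_eq_mul]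
      rw [hc]; field_simp; ring
    · intro v
      simp only
      split_ifs with h
      · have := hy ⟨v, h⟩
        rw [abs_le]; constructor <;> linarith [this.1, this.2]
      · rw [abs_neg, abs_of_nonneg hc0]; exact hcr
    · ext v
      simp only [hπ]
      rw [dif_pos v.2]
  have h1 : ENNReal.ofReal (r ^ m / (m + 1)) ≤
      ENNReal.ofReal ((5 / √m) ^ m) * μH[(m : ℝ)] K := by
    have hv := volume_shear_cube (ι := {v : ι // v ≠ i0}) hr
    have hl := volume_le_hausdorff ((fun y : EuclideanSpace ℝ {v : ι // v ≠ i0} =>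
      (WithLp.toLp 2 fun i => y i - (∑ j, y j) / (Fintype.card {v : ι // v ≠ i0} + 1) :
        EuclideanSpace ℝ {v : ι // v ≠ i0})) '' {y | ∀ i, y i ∈ Set.Icc 0 r})
    rw [hv] at hl
    have h2 := (measure_mono (μ := μH[(m : ℝ)]) himg).trans
      (hlip.hausdorffMeasure_image_le hm0.le K)
    rw [ENNReal.coe_one, ENNReal.one_rpow, one_mul] at h2
    rw [hcard] at hl h2
    refine hl.trans ?_
    gcongr
  have h2 : ((m : ℝ) + 1) ≤ 2 ^ m := by exact_mod_cast Nat.lt_two_pow_self (n := m)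
  have h3 : (r * √m / 10) ^ m * (5 / √m) ^ m ≤ r ^ m / (m + 1) := by
    rw [← mul_pow]
    have : r * √m / 10 * (5 / √m) = r / 2 := by
      have : √(m : ℝ) ≠ 0 := by positivity
      field_simp; ring
    rw [this, div_pow]
    gcongr
  have hw0 : ENNReal.ofReal ((5 / √(m : ℝ)) ^ m) ≠ 0 := (ENNReal.ofReal_pos.2 (by positivity)).ne'
  have h4 := (ENNReal.ofReal_le_ofReal h3).trans h1
  rw [ENNReal.ofReal_mul (by positivity), mul_comm] at h4
  exact (ENNReal.mul_le_mul_iff_right hw0 ENNReal.ofReal_ne_top).1 h4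

end Lower

/-! ### The polytope and its symmetries -/

section Basic
variable (n : ℕ) [NeZero n]

/-- The Euclidean space of mean-zero functions on the vertices of the torus. -/
noncomputable def Vs : Submodule ℝ (EuclideanSpace ℝ (ZMod n × ZMod n)) :=
  LinearMap.ker (∑ v, (EuclideanSpace.proj v :
    EuclideanSpace ℝ (ZMod n × ZMod n) →L[ℝ] ℝ).toLinearMap)

variable {n}

theorem mem_Vs {x : EuclideanSpace ℝ (ZMod n × ZMod n)} : x ∈ Vs n ↔ ∑ v, x v = 0 := by
  simp [Vs, LinearMap.mem_ker]

theorem finrank_Vs {m : ℕ} (hm : n ^ 2 = m + 1) : Module.finrank ℝ (Vs n) = m := by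
  have h0 : (∑ v, (EuclideanSpace.proj v :
    EuclideanSpace ℝ (ZMod n × ZMod n) →L[ℝ] ℝ).toLinearMap : Module.Dual ℝ _) ≠ 0 := by
    intro h
    have := LinearMap.congr_fun h (EuclideanSpace.single 0 1)
    simp at this
  have := Module.Dual.finrank_ker_add_one_of_ne_zero h0
  rw [finrank_euclideanSpace, Fintype.card_prod, ZMod.card, ← sq, hm] at this
  exact Nat.add_right_cancel this

/-- The discrete hessian at a fixed rhombus, as a linear functional. -/
noncomputable def hessL (r : Fin 3) (v : ZMod n × ZMod n) : Vs n →ₗ[ℝ] ℝ where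
  toFun x := hess n r (WithLp.ofLp x.1) v
  map_add' x y := by
    unfold hess
    split_ifs <;> simp <;> ring
  map_smul' c x := by
    unfold hess
    split_ifs <;> simp <;> ring

theorem hessL_apply (r : Fin 3) (v : ZMod n × ZMod n) (x : Vs n) :
    hessL r v x = hess n r (WithLp.ofLp x.1) v := rfl

/-- The polytope `P_n(s)` inside the space of mean-zero functions. -/
def PV (s : Fin 3 → ℝ) : Set (Vs n) := {x | ∀ r v, hessL r v x ≤ s r}

/-- The facets of `P_n(s)` inside the space of mean-zero functions. -/
def FV (s : Fin 3 → ℝ) (r : Fin 3) (v : ZMod n × ZMod n) : Set (Vs n) :=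
  {x ∈ PV s | hessL r v x = s r}

theorem evol_polyP {d : ℝ} (hd : 0 ≤ d) (s : Fin 3 → ℝ) :
    evol n d (polyP n s) = (μH[d] (PV (n := n) s)).toReal := by
  unfold evol
  rw [← isometry_subtype_coe.hausdorffMeasure_image (Or.inl hd) (PV (n := n) s)]
  congr 2
  ext x
  simp only [Set.mem_image, polyP, PV, Set.mem_ofPred_eq, Subtype.exists, exists_and_right,
    exists_eq_right, hessL_apply, mem_Vs]
  constructor
  · rintro ⟨y, ⟨h1, h2⟩, rfl⟩
    exact ⟨h1, h2⟩
  · rintro ⟨h1, h2⟩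
    exact ⟨WithLp.ofLp x, ⟨h1, h2⟩, rfl⟩

theorem evol_facet {d : ℝ} (hd : 0 ≤ d) (s : Fin 3 → ℝ) (r : Fin 3) (v : ZMod n × ZMod n) :
    evol n d (facet n s r v) = (μH[d] (FV s r v)).toReal := by
  unfold evol
  rw [← isometry_subtype_coe.hausdorffMeasure_image (Or.inl hd) (FV s r v)]
  congr 2
  ext x
  simp only [Set.mem_image, facet, FV, polyP, PV, Set.mem_ofPred_eq, Subtype.exists,
    exists_and_right, exists_eq_right, hessL_apply, mem_Vs]
  constructor
  · rintro ⟨y, ⟨⟨h1, h2⟩, h3⟩, rfl⟩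
    exact ⟨⟨h1, h2⟩, h3⟩
  · rintro ⟨⟨h1, h2⟩, h3⟩
    exact ⟨WithLp.ofLp x, ⟨⟨h1, h2⟩, h3⟩, rfl⟩

theorem hessL_continuous (r : Fin 3) (v : ZMod n × ZMod n) :
    Continuous (hessL r v) := LinearMap.continuous_of_finiteDimensional _

theorem convex_PV (s : Fin 3 → ℝ) : Convex ℝ (PV (n := n) s) := by
  intro x hx y hy a b ha hb hab r v
  rw [map_add, map_smul, map_smul, smul_eq_mul, smul_eq_mul]
  have h1 := hx r v
  have h2 := hy r v
  have e : s r = a * s r + b * s r := by rw [← add_mul, hab, one_mul]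
  rw [e]
  gcongr

theorem isClosed_PV (s : Fin 3 → ℝ) : IsClosed (PV (n := n) s) := by
  have : PV (n := n) s = ⋂ r, ⋂ v, {x | hessL r v x ≤ s r} := by ext; simp [PV]
  rw [this]
  exact isClosed_iInter fun r => isClosed_iInter fun v =>
    isClosed_le (hessL_continuous r v) continuous_const

theorem sum_hess (r : Fin 3) (x : ZMod n × ZMod n → ℝ) : ∑ v, hess n r x v = 0 := by
  have h : ∀ w, ∑ v, x (v + w) = ∑ v, x v := fun w =>
    Equiv.sum_comp (Equiv.addRight w) x
  unfold hess
  split_ifs <;>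
  · simp only [Finset.sum_add_distrib, Finset.sum_sub_distrib, Finset.sum_neg_distrib, h]
    ring

theorem const_of_shift {f : ZMod n × ZMod n → ℝ} (h1 : ∀ v, f (v + (1, 0)) = f v)
    (h2 : ∀ v, f (v + (0, 1)) = f v) (v : ZMod n × ZMod n) : f v = f 0 := by
  have a : ∀ (k : ℕ) (v : ZMod n × ZMod n), f (v + ((k : ZMod n), 0)) = f v := by
    intro k
    induction k with
    | zero =>
      intro v
      rw [Nat.cast_zero]
      exact congrArg f (add_zero v)
    | succ k ih =>
      intro v
      rw [← ih v, ← h1 (v + ((k : ZMod n), 0))]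
      congr 1
      ext <;> simp [add_assoc]
  have b : ∀ (k : ℕ) (v : ZMod n × ZMod n), f (v + (0, (k : ZMod n))) = f v := by
    intro k
    induction k with
    | zero =>
      intro v
      rw [Nat.cast_zero]
      exact congrArg f (add_zero v)
    | succ k ih =>
      intro v
      rw [← ih v, ← h2 (v + (0, (k : ZMod n)))]
      congr 1
      ext <;> simp [add_assoc]
  have := b v.2.val (0 + ((v.1.val : ZMod n), 0))
  rw [a] at this
  rw [← this]
  simp

/-- If all hessians vanish, every first difference along the lattice is constant, hence zero
because the torus is finite, so the function is constant. -/
theorem hessL_injective {x : Vs n} (hx : ∀ r v, hessL r v x = 0) : x = 0 := by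
  set f : ZMod n × ZMod n → ℝ := WithLp.ofLp x.1 with hf
  have hsum : ∑ v, f v = 0 := mem_Vs.1 x.2
  have hcard : (0 : ℝ) < Fintype.card (ZMod n × ZMod n) := by exact_mod_cast Fintype.card_pos
  have e0 : ∀ v, -f v + f (v + (1, 0)) - f (v + (2, 1)) + f (v + (1, 1)) = 0 := fun v => by
    have := hx 0 v; simpa [hessL_apply, hess] using this
  have e1 : ∀ v, -f v + f (v + (0, 1)) - f (v + (-1, 1)) + f (v + (-1, 0)) = 0 := fun v => by
    have := hx 1 v; simpa [hessL_apply, hess] using this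
  have e2 : ∀ v, -f v + f (v + (-1, -1)) - f (v + (-1, -2)) + f (v + (0, -1)) = 0 := fun v => by
    have := hx 2 v; simpa [hessL_apply, hess] using this
  have key : ∀ w : ZMod n × ZMod n, (∀ v, f (v + (1, 0) + w) - f (v + (1, 0)) = f (v + w) - f v) →
      (∀ v, f (v + (0, 1) + w) - f (v + (0, 1)) = f (v + w) - f v) → ∀ v, f (v + w) = f v := by
    intro w h1 h2 v
    have hc := const_of_shift (f := fun v => f (v + w) - f v) h1 h2
    have hs : ∑ v, (f (v + w) - f v) = 0 := by
      rw [Finset.sum_sub_distrib, sub_eq_zero]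
      exact Equiv.sum_comp (Equiv.addRight w) f
    rw [Finset.sum_congr rfl fun v _ => hc v] at hs
    simp only [Finset.sum_const, Finset.card_univ, nsmul_eq_mul] at hs
    have := (mul_eq_zero.1 hs).resolve_left hcard.ne'
    have h3 := hc v
    linarith
  have a1 : ∀ v, f (v + (1, 0)) = f v := by
    have d0 : ∀ v, f (v + (1, 1) + (1, 0)) - f (v + (1, 1)) = f (v + (1, 0)) - f v := by
      intro v
      have h := e0 v
      have : v + (1, 1) + (1, 0) = v + (2, 1) := by ext <;> simp <;> ring
      rw [this]; linarith
    have d1 : ∀ v, f (v + (0, 1) + (1, 0)) - f (v + (0, 1)) = f (v + (1, 0)) - f v := by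
      intro v
      have h := e1 (v + (1, 0))
      have i1 : v + (1, 0) + (0, 1) = v + (0, 1) + (1, 0) := by abel
      have i2 : v + (1, 0) + (-1, 1) = v + (0, 1) := by ext <;> simp
      have i3 : v + (1, 0) + (-1, 0) = v := by ext <;> simp
      rw [i1, i2, i3] at h; linarith
    refine key _ (fun v => ?_) d1
    have h1 := d1 (v + (1, 0))
    have h2 := d0 v
    have i1 : v + (1, 0) + (0, 1) = v + (1, 1) := by ext <;> simp
    rw [i1] at h1
    linarith
  have a2 : ∀ v, f (v + (0, 1)) = f v := by
    have d0 : ∀ v, f (v + (1, 0) + (0, 1)) - f (v + (1, 0)) = f (v + (0, 1)) - f v := by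
      intro v
      have h := e1 (v + (1, 0))
      have i2 : v + (1, 0) + (-1, 1) = v + (0, 1) := by ext <;> simp
      have i3 : v + (1, 0) + (-1, 0) = v := by ext <;> simp
      rw [i2, i3] at h; linarith
    have d1 : ∀ v, f (v + (1, 1) + (0, 1)) - f (v + (1, 1)) = f (v + (0, 1)) - f v := by
      intro v
      have h := e2 (v + (1, 2))
      have i1 : v + (1, 1) + (0, 1) = v + (1, 2) := by ext <;> simp <;> ring
      have i2 : v + (1, 2) + (-1, -1) = v + (0, 1) := by ext <;> simp; ring
      have i3 : v + (1, 2) + (-1, -2) = v := by ext <;> simp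
      have i4 : v + (1, 2) + (0, -1) = v + (1, 1) := by ext <;> simp; ring
      rw [i2, i3, i4] at h; rw [i1]; linarith
    refine key _ d0 fun v => ?_
    have h1 := d0 (v + (0, 1))
    have h2 := d1 v
    have i1 : v + (0, 1) + (1, 0) = v + (1, 1) := by ext <;> simp
    rw [i1] at h1
    linarith
  have hc := const_of_shift a1 a2
  rw [Finset.sum_congr rfl fun v _ => hc v] at hsum
  simp only [Finset.sum_const, Finset.card_univ, nsmul_eq_mul] at hsum
  have h0 := (mul_eq_zero.1 hsum).resolve_left hcard.ne'
  ext v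
  exact (hc v).trans h0

theorem isBounded_PV {s : Fin 3 → ℝ} (hs : ∀ r, 0 ≤ s r) : Bornology.IsBounded (PV (n := n) s) := by
  set L : Vs n →ₗ[ℝ] (Fin 3 × (ZMod n × ZMod n) → ℝ) :=
    LinearMap.pi fun e => hessL e.1 e.2 with hL
  have hker : LinearMap.ker L = ⊥ := by
    rw [LinearMap.ker_eq_bot']
    intro x hx
    refine hessL_injective fun r v => ?_
    exact congrFun hx (r, v)
  obtain ⟨K, -, hK⟩ := L.exists_antilipschitzWith hker
  set R : ℝ := Fintype.card (ZMod n × ZMod n) * ∑ r, s r with hR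
  have hsr : ∀ r, s r ≤ ∑ r, s r := fun r =>
    Finset.single_le_sum (f := s) (fun i _ => hs i) (Finset.mem_univ r)
  have hS0 : 0 ≤ ∑ r, s r := Finset.sum_nonneg fun i _ => hs i
  have hcard : (1 : ℝ) ≤ Fintype.card (ZMod n × ZMod n) := by
    exact_mod_cast Fintype.card_pos
  refine (hK.isBounded_preimage (Metric.isBounded_closedBall (x := 0) (r := R))).subset ?_
  intro x hx
  rw [Set.mem_preimage, mem_closedBall_zero_iff, pi_norm_le_iff_of_nonneg (by positivity)]
  rintro ⟨r, v⟩
  have h1 : L x (r, v) = hessL r v x := rfl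
  rw [h1, Real.norm_eq_abs, abs_le]
  have hle := hx r v
  refine ⟨?_, hle.trans ((hsr r).trans (le_mul_of_one_le_left hS0 hcard))⟩
  have hz : ∑ w, hessL r w x = 0 := sum_hess r _
  rw [← Finset.add_sum_erase _ _ (Finset.mem_univ v)] at hz
  have h2 : ∑ w ∈ Finset.univ.erase v, hessL r w x ≤ R := by
    calc _ ≤ ∑ w ∈ Finset.univ.erase v, ∑ r, s r :=
          Finset.sum_le_sum fun w _ => (hx r w).trans (hsr r)
      _ ≤ ∑ w : ZMod n × ZMod n, ∑ r, s r :=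
          Finset.sum_le_sum_of_subset_of_nonneg (Finset.erase_subset _ _) fun _ _ _ => hS0
      _ = R := by rw [Finset.sum_const, Finset.card_univ, nsmul_eq_mul]
  linarith

/-- A bounded piece of a hyperplane has finite measure of codimension one. -/
theorem hausdorff_hyperplane_lt_top {E : Type*} [NormedAddCommGroup E] [InnerProductSpace ℝ E]
    [FiniteDimensional ℝ E] [MeasurableSpace E] [BorelSpace E] {p : ℕ}
    (hE : Module.finrank ℝ E = p + 1) {F : Set E} (hF : Bornology.IsBounded F)
    {ℓ : Module.Dual ℝ E} (hℓ : ℓ ≠ 0) {c : ℝ} (hc : ∀ x ∈ F, ℓ x = c) : μH[(p : ℝ)] F ≠ ∞ := by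
  rcases F.eq_empty_or_nonempty with rfl | ⟨x0, hx0⟩
  · simp
  have hfr := Module.Dual.finrank_ker_add_one_of_ne_zero hℓ
  have hfr' : Module.finrank ℝ (LinearMap.ker ℓ) = p := by omega
  set g : LinearMap.ker ℓ → E := fun y => x0 + y.1 with hg
  have hiso : Isometry g :=
    (IsometryEquiv.addLeft x0).isometry.comp isometry_subtype_coe
  have hsub : F ⊆ g '' (g ⁻¹' F) := by
    intro x hx
    refine ⟨⟨x - x0, ?_⟩, ?_, ?_⟩
    · rw [LinearMap.mem_ker, map_sub, hc x hx, hc x0 hx0, sub_self]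
    · simpa [hg] using hx
    · simp [hg]
  refine ne_top_of_le_ne_top ?_ (measure_mono hsub)
  rw [hiso.hausdorffMeasure_image (Or.inl (Nat.cast_nonneg _)), ← hfr']
  exact (hiso.antilipschitz.isBounded_preimage hF).measure_lt_top.ne

theorem FV_ne_top {p : ℕ} (hp : n ^ 2 = p + 2) {s : Fin 3 → ℝ} (hs : ∀ r, 0 < s r) (r : Fin 3)
    (v : ZMod n × ZMod n) : μH[(p : ℝ)] (FV s r v) ≠ ∞ := by
  have hfr : Module.finrank ℝ (Vs n) = p + 1 := finrank_Vs hp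
  have hb : Bornology.IsBounded (FV s r v) :=
    (isBounded_PV fun r => (hs r).le).subset fun x hx => hx.1
  have hc : ∀ x ∈ FV s r v, hessL r v x = s r := fun x hx => hx.2
  by_cases h : hessL r v = 0
  · have : FV s r v = ∅ := by
      rw [Set.eq_empty_iff_forall_notMem]
      intro x hx
      have h1 := hc x hx
      rw [h, LinearMap.zero_apply] at h1
      exact (hs r).ne h1
    rw [this, measure_empty]
    exact ENNReal.zero_ne_top
  · exact hausdorff_hyperplane_lt_top hfr hb h hc

/-- Permutation of the coordinates, as an isometry of the space of mean-zero functions. -/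
noncomputable def permV (σ : (ZMod n × ZMod n) ≃ (ZMod n × ZMod n)) : Vs n ≃ᵢ Vs n where
  toFun x := ⟨WithLp.toLp 2 fun v => x.1 (σ v), by
    rw [mem_Vs]; exact (Equiv.sum_comp σ _).trans (mem_Vs.1 x.2)⟩
  invFun x := ⟨WithLp.toLp 2 fun v => x.1 (σ.symm v), by
    rw [mem_Vs]; exact (Equiv.sum_comp σ.symm _).trans (mem_Vs.1 x.2)⟩
  left_inv x := by ext v; simp
  right_inv x := by ext v; simp
  isometry_toFun := by
    refine Isometry.of_dist_eq fun x y => ?_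
    rw [Subtype.dist_eq, Subtype.dist_eq, EuclideanSpace.dist_eq, EuclideanSpace.dist_eq]
    congr 1
    exact Equiv.sum_comp σ fun v => dist (x.1 v) (y.1 v) ^ 2

theorem hessL_permV (σ : (ZMod n × ZMod n) ≃ (ZMod n × ZMod n)) (r : Fin 3)
    (v : ZMod n × ZMod n) (x : Vs n) :
    hessL r v (permV σ x) = hess n r (fun v => x.1 (σ v)) v := rfl

theorem hessL_shift (w : ZMod n × ZMod n) (r : Fin 3) (v : ZMod n × ZMod n) (x : Vs n) :
    hessL r v (permV (Equiv.addRight w) x) = hessL r (v + w) x := by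
  rw [hessL_permV, hessL_apply]
  unfold hess
  simp only [Equiv.coe_addRight, add_right_comm _ w]

theorem PV_shift (w : ZMod n × ZMod n) (s : Fin 3 → ℝ) :
    permV (Equiv.addRight w) ⁻¹' PV s = PV (n := n) s := by
  ext x
  simp only [Set.mem_preimage, PV, Set.mem_ofPred_eq, hessL_shift]
  constructor
  · intro h r v
    simpa using h r (v - w)
  · intro h r v
    exact h r _

theorem FV_shift (d : ℝ) (s : Fin 3 → ℝ) (r : Fin 3) (v w : ZMod n × ZMod n) :
    μH[d] (FV s r (v + w)) = μH[d] (FV s r v) := by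
  have : permV (Equiv.addRight w) ⁻¹' FV s r v = FV s r (v + w) := by
    ext x
    have := Set.ext_iff.1 (PV_shift w s) x
    rw [Set.mem_preimage] at this
    simp only [FV, Set.mem_preimage, Set.mem_ofPred_eq, hessL_shift, this]
  rw [← this, IsometryEquiv.hausdorffMeasure_preimage]

/-- All facets of a class are translates of each other under the torus, so they have equal area. -/
theorem FV_eq (d : ℝ) (s : Fin 3 → ℝ) (r : Fin 3) (v w : ZMod n × ZMod n) :
    μH[d] (FV s r v) = μH[d] (FV s r w) := by
  rw [← FV_shift d s r v (w - v), add_sub_cancel]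

/-- By translation invariance the mean slack does not depend on the rhombus within its class, and
the hessians of a class sum to zero, so the mean slack of class `r` is exactly `s r`. -/
theorem mean_slack (d : ℝ) (s : Fin 3 → ℝ) (r : Fin 3) (v : ZMod n × ZMod n) :
    ∫⁻ x in PV s, ENNReal.ofReal (s r - hessL r v x) ∂(μH[d] : Measure (Vs n)) =
      ENNReal.ofReal (s r) * μH[d] (PV (n := n) s) := by
  set μ : Measure (Vs n) := μH[d]
  have hmeas : ∀ v, Measurable fun x : Vs n => ENNReal.ofReal (s r - hessL r v x) := fun v =>
    ENNReal.measurable_ofReal.comp (measurable_const.sub (hessL_continuous r v).measurable)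
  have heq : ∀ w, ∫⁻ x in PV s, ENNReal.ofReal (s r - hessL r w x) ∂μ =
      ∫⁻ x in PV s, ENNReal.ofReal (s r - hessL r v x) ∂μ := by
    intro w
    have hp : MeasurePreserving (permV (Equiv.addRight (w - v))) μ μ :=
      IsometryEquiv.measurePreserving_hausdorffMeasure _ d
    have := hp.setLIntegral_comp_preimage (isClosed_PV s).measurableSet (hmeas v)
    rw [PV_shift] at this
    simpa only [hessL_shift, add_sub_cancel] using this
  have hsum : ∑ w, ∫⁻ x in PV s, ENNReal.ofReal (s r - hessL r w x) ∂μ =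
      Fintype.card (ZMod n × ZMod n) * (ENNReal.ofReal (s r) * μ (PV s)) := by
    rw [← lintegral_finsetSum _ fun w _ => hmeas w]
    rw [setLIntegral_congr_fun (g := fun _ => Fintype.card (ZMod n × ZMod n) * ENNReal.ofReal (s r))
      (isClosed_PV s).measurableSet]
    · rw [setLIntegral_const, mul_assoc]
    intro x hx
    simp only
    rw [← ENNReal.ofReal_sum_of_nonneg fun w _ => sub_nonneg.2 (hx r w), Finset.sum_sub_distrib]
    have : ∑ w, hessL r w x = 0 := sum_hess r _
    rw [this, sub_zero, Finset.sum_const, nsmul_eq_mul, Finset.card_univ,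
      ENNReal.ofReal_mul (Nat.cast_nonneg _), ENNReal.ofReal_natCast]
  rw [Finset.sum_congr rfl fun w _ => heq w, Finset.sum_const, nsmul_eq_mul, Finset.card_univ] at hsum
  refine (ENNReal.mul_right_inj ?_ (ENNReal.natCast_ne_top _)).1 hsum
  exact_mod_cast Fintype.card_ne_zero

end Basic

/-! ### Bumps -/

section Bump

/-- A tent-shaped height profile on `ℕ`: at `j` it is `σ` times the smaller of the numbers of
elements of `A` lying below `j` and at or above `j`.  It changes only across elements of `A`,
each time by at most `σ`. -/
def tent (A : Finset ℕ) (σ : ℝ) (j : ℕ) : ℝ :=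
  σ * (min (A.filter (· < j)).card (A.filter (j ≤ ·)).card : ℕ)

variable {A : Finset ℕ} {σ : ℝ}

theorem tent_nonneg (hσ : 0 ≤ σ) (j : ℕ) : 0 ≤ tent A σ j := by unfold tent; positivity

theorem tent_le (hσ : 0 ≤ σ) (j : ℕ) : tent A σ j ≤ σ * A.card := by
  unfold tent
  gcongr
  exact (min_le_left _ _).trans (Finset.card_filter_le _ _)

theorem tent_zero : tent A σ 0 = 0 := by simp [tent]

theorem tent_eq_zero {M j : ℕ} (hA : A ⊆ Finset.range M) (hj : M ≤ j) : tent A σ j = 0 := by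
  have : A.filter (j ≤ ·) = ∅ := by
    rw [Finset.filter_eq_empty_iff]
    intro k hk
    have := Finset.mem_range.1 (hA hk)
    omega
  simp [tent, this]

theorem tent_step_notMem {j : ℕ} (hj : j ∉ A) : tent A σ (j + 1) = tent A σ j := by
  have h1 : A.filter (· < j + 1) = A.filter (· < j) := by
    ext k
    simp only [Finset.mem_filter]
    refine and_congr_right fun hk => ?_
    have : k ≠ j := by rintro rfl; exact hj hk
    omega
  have h2 : A.filter (j + 1 ≤ ·) = A.filter (j ≤ ·) := by
    ext k
    simp only [Finset.mem_filter]
    refine and_congr_right fun hk => ?_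
    have : k ≠ j := by rintro rfl; exact hj hk
    omega
  rw [tent, tent, h1, h2]

theorem tent_step_mem (hσ : 0 ≤ σ) {j : ℕ} (hj : j ∈ A) :
    |tent A σ (j + 1) - tent A σ j| ≤ σ := by
  have h1 : A.filter (· < j + 1) = insert j (A.filter (· < j)) := by
    ext k
    simp only [Finset.mem_filter, Finset.mem_insert]
    constructor
    · rintro ⟨h, h'⟩
      rcases eq_or_ne k j with rfl | hne
      · exact Or.inl rfl
      · exact Or.inr ⟨h, by omega⟩
    · rintro (rfl | ⟨h, h'⟩)
      · exact ⟨hj, by omega⟩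
      · exact ⟨h, by omega⟩
  have h2 : A.filter (j ≤ ·) = insert j (A.filter (j + 1 ≤ ·)) := by
    ext k
    simp only [Finset.mem_filter, Finset.mem_insert]
    constructor
    · rintro ⟨h, h'⟩
      rcases eq_or_ne k j with rfl | hne
      · exact Or.inl rfl
      · exact Or.inr ⟨h, by omega⟩
    · rintro (rfl | ⟨h, h'⟩)
      · exact ⟨hj, le_rfl⟩
      · exact ⟨h, by omega⟩
  have c1 : (A.filter (· < j + 1)).card = (A.filter (· < j)).card + 1 := by
    rw [h1, Finset.card_insert_of_notMem (by simp)]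
  have c2 : (A.filter (j ≤ ·)).card = (A.filter (j + 1 ≤ ·)).card + 1 := by
    rw [h2, Finset.card_insert_of_notMem (by simp)]
  unfold tent
  rw [c1, c2, ← mul_sub, abs_mul, abs_of_nonneg hσ]
  set c := (A.filter (· < j)).card
  set d := (A.filter (j + 1 ≤ ·)).card
  have h3 : min (c + 1) d ≤ min c (d + 1) + 1 := by omega
  have h4 : min c (d + 1) ≤ min (c + 1) d + 1 := by omega
  have h3' : ((min (c + 1) d : ℕ) : ℝ) ≤ (min c (d + 1) : ℕ) + 1 := by exact_mod_cast h3
  have h4' : ((min c (d + 1) : ℕ) : ℝ) ≤ (min (c + 1) d : ℕ) + 1 := by exact_mod_cast h4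
  have h5 : |((min (c + 1) d : ℕ) : ℝ) - (min c (d + 1) : ℕ)| ≤ 1 := by
    rw [abs_le]; constructor <;> linarith
  nlinarith

variable {n : ℕ} [NeZero n] {M : ℕ}

theorem zmod_val_succ (a : ZMod n) : (a + 1).val = a.val + 1 ∨ (a + 1).val = 0 ∧ a.val + 1 = n := by
  rcases eq_or_ne (a.val + 1) n with h | h
  · right
    refine ⟨?_, h⟩
    rw [ZMod.val_eq_zero, ← ZMod.natCast_zmod_val a, ← Nat.cast_one, ← Nat.cast_add, h,
      ZMod.natCast_self]
  · left
    have := ZMod.val_lt a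
    rcases Nat.lt_or_ge 1 n with h1 | h1
    · have : Fact (1 < n) := ⟨h1⟩
      rw [ZMod.val_add_of_lt] <;> rw [ZMod.val_one]
      omega
    · omega

theorem tent_zmod_step (hσ : 0 ≤ σ) (hA : A ⊆ Finset.range M) (hn : M < n) (a : ZMod n) :
    |tent A σ (a + 1).val - tent A σ a.val| ≤ if a.val ∈ A then σ else 0 := by
  rcases zmod_val_succ a with h | ⟨h, h'⟩
  · rw [h]
    split_ifs with hA'
    · exact tent_step_mem hσ hA'
    · rw [tent_step_notMem hA', sub_self, abs_zero]
  · rw [h, tent_zero, tent_eq_zero hA (by omega), sub_self, abs_zero]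
    split_ifs <;> simp [hσ]

/-- The tent profile placed on the row `b = 0` of the torus. -/
def bump (n : ℕ) (A : Finset ℕ) (σ : ℝ) (v : ZMod n × ZMod n) : ℝ := if v.2 = 0 then tent A σ v.1.val else 0

theorem hess_bump_zero (a b : ZMod n) : hess n 0 (bump n A σ) (a, b) =
    (if b = 0 then tent A σ (a + 1).val - tent A σ a.val else 0) +
    (if b = -1 then tent A σ (a + 1).val - tent A σ (a + 1 + 1).val else 0) := by
  have e : a + 2 = a + 1 + 1 := by ring
  simp only [hess, bump, if_true, Prod.mk_add_mk, add_zero, e, eq_neg_iff_add_eq_zero]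
  split_ifs <;> ring

theorem hess_bump_one (a b : ZMod n) : hess n 1 (bump n A σ) (a, b) =
    (if b = 0 then tent A σ (a - 1).val - tent A σ (a - 1 + 1).val else 0) +
    (if b = -1 then tent A σ (a - 1 + 1).val - tent A σ (a - 1).val else 0) := by
  simp only [hess, bump, if_true, Prod.mk_add_mk, add_zero, eq_neg_iff_add_eq_zero, sub_add_cancel,
    one_ne_zero, if_false, ← sub_eq_add_neg]
  split_ifs <;> ring

theorem hess_bump_two (a b : ZMod n) : hess n 2 (bump n A σ) (a, b) =
    (if b = 1 then tent A σ (a - 1).val + tent A σ a.val else 0) -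
    (if b = 0 then tent A σ a.val else 0) - (if b = 2 then tent A σ (a - 1).val else 0) := by
  have e1 : ((2 : Fin 3) = 0) = False := by simp
  have e2 : ((2 : Fin 3) = 1) = False := by simp
  simp only [hess, bump, Prod.mk_add_mk, add_zero, e1, e2, if_false, ← sub_eq_add_neg,
    sub_eq_zero]
  split_ifs <;> ring

/-- The four rhombi whose hessians feel the slope of the bump between the columns `k`
and `k + 1`. -/
def quad (n k : ℕ) : Finset (Fin 3 × (ZMod n × ZMod n)) :=
  {(0, ((k : ZMod n), 0)), (0, ((k : ZMod n) - 1, -1)), (1, ((k : ZMod n) + 1, 0)),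
    (1, ((k : ZMod n) + 1, -1))}

theorem card_quad_le (k : ℕ) : (quad n k).card ≤ 4 := Finset.card_le_four

/-- If the slacks `Y` are at least `σ` on the rhombi of `quad n k` for all `k ∈ A`, the bump over
`A` violates no constraint of class `0` or `1`: the slope of the tent is at most `σ`, and it is
nonzero only across columns of `A`. -/
theorem hess_bump_le_slack (hσ : 0 ≤ σ) (hA : A ⊆ Finset.range M) (hn : M < n) (hn2 : 2 ≤ n)
    {Y : Fin 3 → ZMod n × ZMod n → ℝ} (hY : ∀ r v, 0 ≤ Y r v)
    (hAY : ∀ k ∈ A, ∀ e ∈ quad n k, σ ≤ Y e.1 e.2) {r : Fin 3} (hr : r ≠ 2)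
    (v : ZMod n × ZMod n) : hess n r (bump n A σ) v ≤ Y r v := by
  have : Fact (1 < n) := ⟨hn2⟩
  have h01 : (0 : ZMod n) ≠ -1 := by
    intro h
    exact one_ne_zero (neg_eq_zero.1 h.symm)
  obtain ⟨a, b⟩ := v
  have hst := fun a : ZMod n => abs_le.1 (tent_zmod_step hσ hA hn a)
  have fin : ∀ (t y : ℝ) (c : ZMod n), t ≤ (if c.val ∈ A then σ else 0) → 0 ≤ y →
      (c.val ∈ A → σ ≤ y) → t ≤ y := by
    intro t y c h1 h2 h3
    split_ifs at h1 with h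
    · exact h1.trans (h3 h)
    · exact h1.trans h2
  have hr' : r = 0 ∨ r = 1 := by
    fin_cases r
    · exact Or.inl rfl
    · exact Or.inr rfl
    · exact absurd rfl hr
  rcases hr' with rfl | rfl
  · rw [hess_bump_zero]
    by_cases h0 : b = 0
    · subst h0
      rw [if_pos rfl, if_neg h01, add_zero]
      refine fin _ _ a (hst a).2 (hY _ _) fun h => ?_
      exact hAY _ h (0, (a, 0)) (by simp [quad])
    · rw [if_neg h0, zero_add]
      split_ifs with h1
      · subst h1
        refine fin _ _ (a + 1) (by linarith [(hst (a + 1)).1]) (hY _ _) fun h => ?_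
        exact hAY _ h (0, (a, -1)) (by simp [quad])
      · exact hY _ _
  · rw [hess_bump_one]
    by_cases h0 : b = 0
    · subst h0
      rw [if_pos rfl, if_neg h01, add_zero]
      refine fin _ _ (a - 1) (by linarith [(hst (a - 1)).1]) (hY _ _) fun h => ?_
      exact hAY _ h (1, (a, 0)) (by simp [quad])
    · rw [if_neg h0, zero_add]
      split_ifs with h1
      · subst h1
        refine fin _ _ (a - 1) (hst (a - 1)).2 (hY _ _) fun h => ?_
        exact hAY _ h (1, (a, -1)) (by simp [quad])
      · exact hY _ _

/-- The bump can violate constraints of class `2` only at `M + 1` rhombi based on the row `1`. -/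
theorem hess_bump_two_pos (hσ : 0 ≤ σ) (hA : A ⊆ Finset.range M)
    {v : ZMod n × ZMod n} (hv : 0 < hess n 2 (bump n A σ) v) :
    ∃ j ∈ Finset.range (M + 1), v = ((j : ZMod n), 1) := by
  obtain ⟨a, b⟩ := v
  rw [hess_bump_two] at hv
  have h1 := tent_nonneg (A := A) hσ a.val
  have h2 := tent_nonneg (A := A) hσ (a - 1).val
  have hb : b = 1 := by
    by_contra h
    rw [if_neg h] at hv
    split_ifs at hv <;> linarith
  have hpos : 0 < tent A σ (a - 1).val + tent A σ a.val := by
    rw [if_pos hb] at hv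
    split_ifs at hv <;> linarith
  refine ⟨a.val, ?_, by simp [hb]⟩
  rw [Finset.mem_range]
  by_contra! hcon
  have h3 : tent A σ a.val = 0 := tent_eq_zero hA (by omega)
  have h4 : tent A σ (a - 1).val = 0 := by
    refine tent_eq_zero hA ?_
    have := zmod_val_succ (a - 1)
    rw [sub_add_cancel] at this
    omega
  linarith

/-- If `A` has at least `q` elements on either side of `2 * q`, the bump raises the class `2`
hessian above the middle column by at least `σ * q`. -/
theorem hess_bump_two_apex (hσ : 0 ≤ σ) {q : ℕ} (hn : 2 * q < n) (hn3 : 3 ≤ n)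
    (h1 : q ≤ (A.filter (· < 2 * q)).card) (h2 : q ≤ (A.filter (2 * q ≤ ·)).card) :
    σ * q ≤ hess n 2 (bump n A σ) (((2 * q : ℕ) : ZMod n), 1) := by
  have : Fact (1 < n) := ⟨by omega⟩
  have h10 : (1 : ZMod n) ≠ 0 := one_ne_zero
  have h12 : (1 : ZMod n) ≠ 2 := by
    intro h
    have h' : (1 : ZMod n) + 1 = 1 + 0 := by rw [add_zero]; nth_rewrite 3 [h]; norm_num
    exact h10 (add_left_cancel h')
  rw [hess_bump_two, if_pos rfl, if_neg h10, if_neg h12, sub_zero, sub_zero]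
  have h3 := tent_nonneg (A := A) hσ (((2 * q : ℕ) : ZMod n) - 1).val
  have h4 : σ * q ≤ tent A σ ((2 * q : ℕ) : ZMod n).val := by
    rw [ZMod.val_natCast_of_lt hn]
    unfold tent
    gcongr
    exact le_min h1 h2
  linarith

theorem sum_bump_sq_le (hσ : 0 ≤ σ) (hA : A ⊆ Finset.range M) :
    ∑ v, bump n A σ v ^ 2 ≤ M * (σ * M) ^ 2 := by
  have hcA : (A.card : ℝ) ≤ M := by
    have := Finset.card_le_card hA
    rw [Finset.card_range] at this
    exact_mod_cast this
  have hb : ∀ v, bump n A σ v ^ 2 ≤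
      if v.2 = 0 ∧ v.1.val < M then (σ * M) ^ 2 else 0 := by
    intro v
    unfold bump
    by_cases h0 : v.2 = 0
    · by_cases h1 : v.1.val < M
      · rw [if_pos h0, if_pos ⟨h0, h1⟩]
        have := tent_nonneg (A := A) hσ v.1.val
        gcongr
        exact (tent_le hσ _).trans (by gcongr)
      · rw [if_pos h0, if_neg (fun h => h1 h.2), tent_eq_zero hA (not_lt.1 h1)]
        simp
    · rw [if_neg h0, if_neg (fun h => h0 h.1)]
      simp
  refine (Finset.sum_le_sum fun v _ => hb v).trans ?_
  rw [← Finset.sum_filter, Finset.sum_const, nsmul_eq_mul]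
  gcongr
  have : (Finset.univ.filter fun v : ZMod n × ZMod n => v.2 = 0 ∧ v.1.val < M).card ≤
      (Finset.range M).card := by
    refine Finset.card_le_card_of_injOn (fun v => v.1.val) (fun v hv => ?_) ?_
    · have := (Finset.mem_filter.1 (Finset.mem_coe.1 hv)).2
      exact Finset.mem_coe.2 (Finset.mem_range.2 this.2)
    · intro v hv w hw h
      have h1 := (Finset.mem_filter.1 (Finset.mem_coe.1 hv)).2.1
      have h2 := (Finset.mem_filter.1 (Finset.mem_coe.1 hw)).2.1
      exact Prod.ext (ZMod.val_injective n h) (h1.trans h2.symm)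
  rwa [Finset.card_range] at this

/-- Adding a constant does not change the hessian. -/
theorem hess_sub_const (r : Fin 3) (x : ZMod n × ZMod n → ℝ) (c : ℝ) (v : ZMod n × ZMod n) :
    hess n r (fun w => x w - c) v = hess n r x v := by
  unfold hess
  split_ifs <;> ring

/-- Recentring a function gives a mean-zero function with the same hessian and no larger norm. -/
theorem exists_centered (x : ZMod n × ZMod n → ℝ) : ∃ u : Vs n,
    (∀ r v, hessL r v u = hess n r x v) ∧ ‖u‖ ^ 2 ≤ ∑ v, x v ^ 2 := by
  have hN : (0 : ℝ) < Fintype.card (ZMod n × ZMod n) := by exact_mod_cast Fintype.card_pos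
  set N : ℝ := (Fintype.card (ZMod n × ZMod n) : ℝ) with hNdef
  set c : ℝ := (∑ v, x v) / N with hc
  have hcN : ∑ v, x v = N * c := by rw [hc]; field_simp
  have hmem : (WithLp.toLp 2 fun v => x v - c : EuclideanSpace ℝ (ZMod n × ZMod n)) ∈ Vs n := by
    rw [mem_Vs]
    simp only [Finset.sum_sub_distrib, Finset.sum_const, Finset.card_univ, nsmul_eq_mul]
    rw [hcN, ← hNdef, sub_self]
  refine ⟨⟨_, hmem⟩, fun r v => ?_, ?_⟩
  · rw [hessL_apply]
    exact hess_sub_const r x c v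
  · rw [Submodule.coe_norm, EuclideanSpace.norm_sq_eq]
    simp only [Real.norm_eq_abs, sq_abs]
    have : ∀ v, (x v - c) ^ 2 = x v ^ 2 - 2 * c * x v + c ^ 2 := fun v => by ring
    simp only [this, Finset.sum_add_distrib, Finset.sum_sub_distrib, ← Finset.mul_sum,
      Finset.sum_const, Finset.card_univ, nsmul_eq_mul]
    rw [hcN, ← hNdef]
    nlinarith [mul_nonneg hN.le (sq_nonneg c)]

end Bump

/-! ### Typical points of the polytope -/

section Core
variable {n : ℕ} [NeZero n]

/-- Markov's inequality for the number of events of a finite family that occur. -/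
theorem count_markov {Ω : Type*} [MeasurableSpace Ω] (μ : Measure Ω) {P : Set Ω}
    {B : ℕ → Set Ω} (hB : ∀ k, MeasurableSet (B k)) (I : Finset ℕ) {q : ℕ} {δ : ℝ≥0∞}
    (hδ : ∀ k ∈ I, μ (P ∩ B k) ≤ δ) {G : Set Ω}
    (hG : ∀ x ∈ G, ∃ J ⊆ I, q ≤ J.card ∧ ∀ k ∈ J, x ∈ B k) :
    q * μ (P ∩ G) ≤ I.card * δ := by
  set f : Ω → ℝ≥0∞ := fun x => ∑ k ∈ I, (B k).indicator 1 x with hf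
  have hfm : Measurable f := Finset.measurable_sum _ fun k _ => measurable_one.indicator (hB k)
  have hsub : P ∩ G ⊆ P ∩ {x | (q : ℝ≥0∞) ≤ f x} := by
    rintro x ⟨hxP, hxG⟩
    refine ⟨hxP, ?_⟩
    obtain ⟨J, hJI, hJq, hJ⟩ := hG x hxG
    calc (q : ℝ≥0∞) ≤ J.card := by exact_mod_cast hJq
      _ = ∑ k ∈ J, (B k).indicator 1 x := by
        rw [Finset.sum_congr rfl fun k hk => Set.indicator_of_mem (hJ k hk) _]
        simp
      _ ≤ f x := Finset.sum_le_sum_of_subset hJI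
  have hms : MeasurableSet {x | (q : ℝ≥0∞) ≤ f x} := measurableSet_le measurable_const hfm
  calc q * μ (P ∩ G) ≤ q * μ (P ∩ {x | (q : ℝ≥0∞) ≤ f x}) := by gcongr
    _ = q * (μ.restrict P) {x | (q : ℝ≥0∞) ≤ f x} := by
      rw [Measure.restrict_apply hms, Set.inter_comm]
    _ ≤ ∫⁻ x, f x ∂(μ.restrict P) := mul_meas_ge_le_lintegral hfm _
    _ = ∑ k ∈ I, μ (P ∩ B k) := by
      rw [hf, lintegral_finsetSum _ fun k _ => measurable_one.indicator (hB k)]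
      refine Finset.sum_congr rfl fun k _ => ?_
      rw [lintegral_indicator_one (hB k), Measure.restrict_apply (hB k), Set.inter_comm]
    _ ≤ I.card * δ := by
      refine (Finset.sum_le_sum hδ).trans ?_
      rw [Finset.sum_const, nsmul_eq_mul]

/-- Moving from a point of the polytope in a direction that can only violate constraints of
class `2`, and does violate one of them before time `1`, one leaves through a facet of class `2`
at which the direction points outwards. -/
theorem exists_mem_sweep {s : Fin 3 → ℝ} {x u : Vs n} (hx : x ∈ PV s)
    (hu : ∀ r, r ≠ 2 → ∀ v, hessL r v u ≤ s r - hessL r v x) {w : ZMod n × ZMod n}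
    (hw : 0 < hessL 2 w u) (hw' : s 2 - hessL 2 w x ≤ hessL 2 w u) :
    ∃ v, 0 < hessL 2 v u ∧ x ∈ sweep (FV s 2 v) (-u) := by
  obtain ⟨v, hv, hmin⟩ := Finset.exists_min_image
    (Finset.univ.filter fun v : ZMod n × ZMod n => 0 < hessL 2 v u)
    (fun v => (s 2 - hessL 2 v x) / hessL 2 v u) ⟨w, by simpa using hw⟩
  rw [Finset.mem_filter] at hv
  have hv := hv.2
  set θ : ℝ := (s 2 - hessL 2 v x) / hessL 2 v u with hθ
  have hθ0 : 0 ≤ θ := div_nonneg (sub_nonneg.2 (hx 2 v)) hv.le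
  have hθ1 : θ ≤ 1 := (hmin w (by simpa using hw)).trans ((div_le_one hw).2 hw')
  have hθv : θ * hessL 2 v u = s 2 - hessL 2 v x := div_mul_cancel₀ _ hv.ne'
  refine ⟨v, hv, (x + θ • u, θ), ⟨⟨fun r e => ?_, ?_⟩, hθ0, hθ1⟩, by simp⟩
  · rw [map_add, map_smul, smul_eq_mul]
    have h1 := hx r e
    rcases le_or_gt (hessL r e u) 0 with h | h
    · nlinarith
    · by_cases hr : r = 2
      · subst hr
        have h2 := hmin e (by simpa using h)
        rw [le_div_iff₀ h] at h2
        linarith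
      · have h2 := hu r hr e
        nlinarith
  · rw [map_add, map_smul, smul_eq_mul, hθv]
    ring

theorem isAddHaar_Vs {m : ℕ} (hm : n ^ 2 = m + 1) :
    (μH[(m : ℝ)] : Measure (Vs n)).IsAddHaarMeasure := by
  have := finrank_Vs (n := n) hm
  rw [← this]
  infer_instance

theorem PV_ne_top {m : ℕ} (hm : n ^ 2 = m + 1) {s : Fin 3 → ℝ} (hs : ∀ r, 0 ≤ s r) :
    μH[(m : ℝ)] (PV (n := n) s) ≠ ∞ := by
  have := isAddHaar_Vs hm
  exact (isBounded_PV hs).measure_lt_top.ne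

/-- The mean-zero functions at which some rhombus of `quad n k` has slack below `σ`. -/
def badCol (s : Fin 3 → ℝ) (σ : ℝ) (k : ℕ) : Set (Vs n) :=
  ⋃ e ∈ quad n k, {x | s e.1 - hessL e.1 e.2 x < σ}

theorem measurableSet_badCol (s : Fin 3 → ℝ) (σ : ℝ) (k : ℕ) :
    MeasurableSet (badCol (n := n) s σ k) := by
  refine Finset.measurableSet_biUnion _ fun e _ => ?_
  exact (isOpen_lt (continuous_const.sub (hessL_continuous _ _)) continuous_const).measurableSet

/-- A union bound over the four rhombi of `quad n k`, each saturated with probability at most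
`1 / 64` by `anticonc`. -/
theorem measure_badCol_le {m : ℕ} (hm : n ^ 2 = m + 1) {s : Fin 3 → ℝ} {m0 : ℝ} (hm0 : 0 < m0)
    (hs : ∀ r, m0 ≤ s r) (k : ℕ) :
    μH[(m : ℝ)] (PV s ∩ badCol (n := n) s (m0 / 1024) k) ≤
      ENNReal.ofReal (1 / 16) * μH[(m : ℝ)] (PV (n := n) s) := by
  have := isAddHaar_Vs hm
  have hs0 : ∀ r, 0 < s r := fun r => hm0.trans_le (hs r)
  rw [badCol, Set.inter_iUnion₂]
  refine (measure_biUnion_finset_le _ _).trans ?_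
  have : ∀ e ∈ quad n k, μH[(m : ℝ)] (PV s ∩ {x | s e.1 - hessL e.1 e.2 x < m0 / 1024}) ≤
      ENNReal.ofReal (1 / 64) * μH[(m : ℝ)] (PV (n := n) s) := by
    intro e _
    refine le_trans (measure_mono ?_) (anticonc (ℓ := hessL e.1 e.2) (convex_PV s)
      (isClosed_PV s).measurableSet (PV_ne_top hm fun r => (hs0 r).le)
      (fun x hx => hx e.1 e.2) (hs0 e.1) (mean_slack _ s e.1 e.2).ge)
    rintro x ⟨hx, hx'⟩
    rw [Set.mem_ofPred_eq] at hx'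
    refine ⟨hx, hx'.trans_le ?_⟩
    have := hs e.1
    gcongr
  refine (Finset.sum_le_sum this).trans ?_
  rw [Finset.sum_const, nsmul_eq_mul, ← mul_assoc]
  gcongr
  calc ((quad n k).card : ℝ≥0∞) * ENNReal.ofReal (1 / 64) ≤ 4 * ENNReal.ofReal (1 / 64) := by
        gcongr
        exact_mod_cast card_quad_le (n := n) k
    _ = ENNReal.ofReal (1 / 16) := by
        rw [show (4 : ℝ≥0∞) = ENNReal.ofReal 4 by simp, ← ENNReal.ofReal_mul (by norm_num)]
        norm_num

/-- The typical points: at least half of the columns on either side of `2 q` are unsaturated,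
and the slack at the rhombus above the middle is not too large. -/
def goodPts (s : Fin 3 → ℝ) (σ : ℝ) (q : ℕ) : Set (Vs n) :=
  {x ∈ PV s | (∃ A ⊆ Finset.range (4 * q), q ≤ (A.filter (· < 2 * q)).card ∧
      q ≤ (A.filter (2 * q ≤ ·)).card ∧
      ∀ k ∈ A, ∀ e ∈ quad n k, σ ≤ s e.1 - hessL e.1 e.2 x) ∧
    s 2 - hessL 2 (((2 * q : ℕ) : ZMod n), 1) x ≤ 4 * s 2}

/-- At least half of the volume of the polytope consists of typical points: each of the two halves
of the columns has too many bad ones with probability at most `1 / 8`, and the slack at the middle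
exceeds four times its mean with probability at most `1 / 4`. -/
theorem measure_PV_le_goodPts {m : ℕ} (hm : n ^ 2 = m + 1) {s : Fin 3 → ℝ} {m0 : ℝ}
    (hm0 : 0 < m0) (hs : ∀ r, m0 ≤ s r) {q : ℕ} (hq : 0 < q) :
    μH[(m : ℝ)] (PV (n := n) s) ≤ 2 * μH[(m : ℝ)] (goodPts (n := n) s (m0 / 1024) q) := by
  classical
  set μ : Measure (Vs n) := μH[(m : ℝ)] with hμ
  have hs0 : ∀ r, 0 < s r := fun r => hm0.trans_le (hs r)
  have hfin : μ (PV s) ≠ ∞ := PV_ne_top hm fun r => (hs0 r).le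
  set w : ZMod n × ZMod n := (((2 * q : ℕ) : ZMod n), 1) with hw
  -- the columns of the interval `I` that are bad at `x`
  set Bd : Finset ℕ → Vs n → Finset ℕ := fun I x =>
    I.filter fun k => x ∈ badCol s (m0 / 1024) k with hBd
  set G : Finset ℕ → Set (Vs n) := fun I => {x | q ≤ (Bd I x).card} with hG
  have hGle : ∀ I : Finset ℕ, I.card = 2 * q →
      μ (PV s ∩ G I) ≤ ENNReal.ofReal (1 / 8) * μ (PV s) := by
    intro I hI
    have h := count_markov μ (P := PV s) (B := badCol (n := n) s (m0 / 1024))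
      (measurableSet_badCol s _) I (q := q)
      (fun k _ => measure_badCol_le hm hm0 hs k) (G := G I)
      (fun x hx => ⟨Bd I x, Finset.filter_subset _ _, hx, fun k hk => (Finset.mem_filter.1 hk).2⟩)
    have hq0 : (q : ℝ≥0∞) ≠ 0 := by exact_mod_cast hq.ne'
    rw [← ENNReal.mul_le_mul_iff_right hq0 (ENNReal.natCast_ne_top q)]
    refine h.trans_eq ?_
    rw [hI, ← mul_assoc, ← mul_assoc]
    congr 1
    push_cast
    rw [mul_comm 2, mul_assoc]
    congr 1
    rw [show (2 : ℝ≥0∞) = ENNReal.ofReal 2 by simp, ← ENNReal.ofReal_mul (by norm_num)]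
    norm_num
  set H : Set (Vs n) := {x | ENNReal.ofReal (4 * s 2) ≤ ENNReal.ofReal (s 2 - hessL 2 w x)} with hH
  have hfm : Measurable fun x : Vs n => ENNReal.ofReal (s 2 - hessL 2 w x) :=
    ENNReal.measurable_ofReal.comp
      (continuous_const.sub (hessL_continuous 2 w)).measurable
  have hHle : μ (PV s ∩ H) ≤ ENNReal.ofReal (1 / 4) * μ (PV s) := by
    have h := mul_meas_ge_le_lintegral (μ := μ.restrict (PV s)) hfm (ENNReal.ofReal (4 * s 2))
    rw [Measure.restrict_apply (measurableSet_le measurable_const hfm), Set.inter_comm,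
      mean_slack] at h
    have h4 : ENNReal.ofReal (4 * s 2) ≠ 0 := by
      rw [Ne, ENNReal.ofReal_eq_zero, not_le]
      have := hs0 2
      positivity
    rw [← ENNReal.mul_le_mul_iff_right h4 ENNReal.ofReal_ne_top]
    refine h.trans_eq ?_
    rw [← mul_assoc, ← ENNReal.ofReal_mul (by have := hs0 2; positivity)]
    congr 2
    ring
  have hcover : PV s ⊆ goodPts (n := n) s (m0 / 1024) q ∪ ((PV s ∩ G (Finset.range (2 * q))) ∪
      (PV s ∩ G (Finset.Ico (2 * q) (4 * q))) ∪ (PV s ∩ H)) := by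
    intro x hx
    by_contra hcon
    simp only [Set.mem_union, Set.mem_inter_iff, hx, true_and, not_or] at hcon
    obtain ⟨h0, ⟨h1, h2⟩, h3⟩ := hcon
    apply h0
    refine ⟨hx, ⟨(Finset.range (4 * q)).filter fun k => x ∉ badCol s (m0 / 1024) k,
      Finset.filter_subset _ _, ?_, ?_, ?_⟩, ?_⟩
    · have e := Finset.card_filter_add_card_filter_not (s := Finset.range (2 * q))
        (fun k => x ∈ badCol s (m0 / 1024) k)
      rw [Finset.card_range] at e
      have h1' : (Bd (Finset.range (2 * q)) x).card < q := not_le.1 h1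
      simp only [hBd] at h1'
      have hsub : (Finset.range (2 * q)).filter (fun k => x ∉ badCol s (m0 / 1024) k) ⊆
          ((Finset.range (4 * q)).filter fun k => x ∉ badCol s (m0 / 1024) k).filter
            (· < 2 * q) := by
        intro k hk
        simp only [Finset.mem_filter, Finset.mem_range] at hk ⊢
        exact ⟨⟨by omega, hk.2⟩, hk.1⟩
      have := Finset.card_le_card hsub
      omega
    · have e := Finset.card_filter_add_card_filter_not (s := Finset.Ico (2 * q) (4 * q))
        (fun k => x ∈ badCol s (m0 / 1024) k)
      rw [Nat.card_Ico] at e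
      have h1' : (Bd (Finset.Ico (2 * q) (4 * q)) x).card < q := not_le.1 h2
      simp only [hBd] at h1'
      have hsub : (Finset.Ico (2 * q) (4 * q)).filter (fun k => x ∉ badCol s (m0 / 1024) k) ⊆
          ((Finset.range (4 * q)).filter fun k => x ∉ badCol s (m0 / 1024) k).filter
            (2 * q ≤ ·) := by
        intro k hk
        simp only [Finset.mem_filter, Finset.mem_range, Finset.mem_Ico] at hk ⊢
        exact ⟨⟨hk.1.2, hk.2⟩, hk.1.1⟩
      have := Finset.card_le_card hsub
      omega
    · intro k hk e he
      have h := (Finset.mem_filter.1 hk).2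
      by_contra! hlt
      exact h (Set.mem_biUnion he hlt)
    · by_contra! hlt
      exact h3 (ENNReal.ofReal_le_ofReal hlt.le)
  have htot : μ (PV s) ≤ μ (goodPts (n := n) s (m0 / 1024) q) +
      ENNReal.ofReal (1 / 2) * μ (PV s) := by
    refine (measure_mono hcover).trans ((measure_union_le _ _).trans ?_)
    gcongr
    refine (measure_union_le _ _).trans ?_
    refine (add_le_add (measure_union_le _ _) le_rfl).trans ?_
    refine (add_le_add (add_le_add (hGle _ (Finset.card_range _))
      (hGle _ (by rw [Nat.card_Ico]; omega))) hHle).trans_eq ?_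
    rw [← add_mul, ← add_mul, ← ENNReal.ofReal_add (by norm_num) (by norm_num),
      ← ENNReal.ofReal_add (by norm_num) (by norm_num)]
    norm_num
  have hhalf : μ (PV s) = ENNReal.ofReal (1 / 2) * μ (PV s) + ENNReal.ofReal (1 / 2) * μ (PV s) := by
    rw [← add_mul, ← ENNReal.ofReal_add (by norm_num) (by norm_num)]
    norm_num
  have hle : ENNReal.ofReal (1 / 2) * μ (PV s) ≤ μ (goodPts (n := n) s (m0 / 1024) q) := by
    have hne : ENNReal.ofReal (1 / 2) * μ (PV s) ≠ ∞ := ENNReal.mul_ne_top ENNReal.ofReal_ne_top hfin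
    refine (ENNReal.add_le_add_iff_right hne).1 ?_
    rwa [← hhalf]
  rw [hhalf, two_mul]
  exact add_le_add hle hle

end Core

/-! ### Volume versus facet area -/

section FacetBound
variable {n : ℕ} [NeZero n]

theorem sweep_FV_le {p : ℕ} (hp1 : 1 ≤ p) (hp : n ^ 2 = p + 2) {s : Fin 3 → ℝ}
    (hs : ∀ r, 0 < s r) (r : Fin 3) (v : ZMod n × ZMod n) {u : Vs n} (hu : 0 < hessL r v u) :
    μH[((p + 1 : ℕ) : ℝ)] (sweep (FV s r v) (-u)) ≤
      ENNReal.ofReal (2 * √((p + 1 : ℕ) : ℝ) * ‖u‖) * μH[(p : ℝ)] (FV s r v) := by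
  -- the Riesz representative of the hessian functional
  set a : Vs n := (InnerProductSpace.toDual ℝ (Vs n)).symm (hessL r v).toContinuousLinearMap with ha
  have hin : ∀ x, inner ℝ a x = hessL r v x := fun x => by
    rw [ha, InnerProductSpace.toDual_symm_apply]
    rfl
  clear_value a
  have h1 : ∀ x ∈ FV s r v, inner ℝ a x = s r := fun x hx => (hin x).trans hx.2
  have h2 : inner ℝ a (-u) ≠ 0 := by
    rw [hin, map_neg, neg_ne_zero]
    exact hu.ne'
  have hfr : Module.finrank ℝ (Vs n) = p + 1 := finrank_Vs hp
  have hft := FV_ne_top hp hs r v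
  have h3 := sweep_le hp1 hfr (FV s r v) (-u) a h1 h2 hft
  rw [norm_neg] at h3
  exact h3

/-- The volume of the polytope is bounded by the area of a facet of class `2`: a typical point
can be pushed out through one of the facets of class `2` close to the origin by adding one of
boundedly many bumps. -/
theorem PV_le_FV_two {p : ℕ} (hp1 : 1 ≤ p) (hp : n ^ 2 = p + 2) {s : Fin 3 → ℝ} {m0 : ℝ}
    (hm0 : 0 < m0) (hs : ∀ r, m0 ≤ s r) {q : ℕ} (hq : 0 < q) (hqs : 4 * s 2 ≤ m0 / 1024 * q)
    (hn : 4 * q + 4 ≤ n) (v : ZMod n × ZMod n) :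
    μH[((p + 1 : ℕ) : ℝ)] (PV (n := n) s) ≤
      ENNReal.ofReal (2 * (2 ^ (4 * q) * ((4 * q + 1) *
        (2 * √((p + 1 : ℕ) : ℝ) * (8 * q ^ 2 * (m0 / 1024)))))) * μH[(p : ℝ)] (FV s 2 v) := by
  set σ : ℝ := m0 / 1024 with hσdef
  have hσ : 0 < σ := by positivity
  have hs0 : ∀ r, 0 < s r := fun r => hm0.trans_le (hs r)
  set F : ℝ≥0∞ := μH[(p : ℝ)] (FV s 2 v) with hF
  set c : ℝ := 2 * √((p + 1 : ℕ) : ℝ) * (8 * q ^ 2 * σ) with hc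
  have hc0 : 0 ≤ c := by positivity
  choose u hu1 hu2 using fun A : Finset ℕ => exists_centered (bump n A σ)
  set T : Finset ℕ → ℕ → Set (Vs n) := fun A j =>
    {x | 0 < hessL 2 ((j : ZMod n), 1) (u A) ∧ x ∈ sweep (FV s 2 ((j : ZMod n), 1)) (-u A)} with hT
  have hcover : goodPts (n := n) s σ q ⊆
      ⋃ A ∈ (Finset.range (4 * q)).powerset, ⋃ j ∈ Finset.range (4 * q + 1), T A j := by
    rintro x ⟨hx, ⟨A, hA, h1, h2, h3⟩, h4⟩
    have hap : σ * q ≤ hessL 2 (((2 * q : ℕ) : ZMod n), 1) (u A) := by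
      rw [hu1]
      exact hess_bump_two_apex hσ.le (by omega) (by omega) h1 h2
    obtain ⟨e, he, hxe⟩ := exists_mem_sweep hx (u := u A)
      (fun r hr e => by
        rw [hu1]
        exact hess_bump_le_slack hσ.le hA (by omega) (by omega)
          (Y := fun r v => s r - hessL r v x) (fun r v => sub_nonneg.2 (hx r v)) h3 hr e)
      (w := (((2 * q : ℕ) : ZMod n), 1)) (lt_of_lt_of_le (by positivity) hap)
      ((h4.trans hqs).trans hap)
    have he' := he
    rw [hu1] at he'
    obtain ⟨j, hj, rfl⟩ := hess_bump_two_pos hσ.le hA he'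
    simp only [Set.mem_iUnion]
    exact ⟨A, Finset.mem_powerset.2 hA, j, hj, he, hxe⟩
  have hbound : ∀ A ∈ (Finset.range (4 * q)).powerset, ∀ j ∈ Finset.range (4 * q + 1),
      μH[((p + 1 : ℕ) : ℝ)] (T A j) ≤ ENNReal.ofReal c * F := by
    intro A hA j _
    by_cases hpos : 0 < hessL 2 ((j : ZMod n), 1) (u A)
    · refine (measure_mono fun x hx => hx.2).trans ((sweep_FV_le hp1 hp hs0 2 _ hpos).trans ?_)
      rw [FV_eq _ s 2 _ v]
      refine mul_le_mul_left (ENNReal.ofReal_le_ofReal ?_) _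
      rw [hc]
      refine mul_le_mul_of_nonneg_left ?_ (by positivity)
      refine abs_le_of_sq_le_sq' ?_ (by positivity) |>.2
      refine (hu2 A).trans ((sum_bump_sq_le hσ.le (Finset.mem_powerset.1 hA)).trans ?_)
      have hq1 : (1 : ℝ) ≤ q := by exact_mod_cast hq
      push_cast
      have : (4 * q : ℝ) * (σ * (4 * q)) ^ 2 = 64 * q ^ 3 * σ ^ 2 := by ring
      rw [this]
      have : (8 * (q : ℝ) ^ 2 * σ) ^ 2 = 64 * (q ^ 3 * q) * σ ^ 2 := by ring
      rw [this]
      have : (q : ℝ) ^ 3 ≤ q ^ 3 * q := le_mul_of_one_le_right (by positivity) hq1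
      gcongr
    · have : T A j = ∅ := Set.eq_empty_iff_forall_notMem.2 fun x hx => hpos hx.1
      rw [this, measure_empty]
      exact zero_le
  calc μH[((p + 1 : ℕ) : ℝ)] (PV (n := n) s)
      ≤ 2 * μH[((p + 1 : ℕ) : ℝ)] (goodPts (n := n) s σ q) :=
        measure_PV_le_goodPts hp hm0 hs hq
    _ ≤ 2 * ∑ A ∈ (Finset.range (4 * q)).powerset, ∑ j ∈ Finset.range (4 * q + 1),
          ENNReal.ofReal c * F := by
        gcongr
        refine (measure_mono hcover).trans ((measure_biUnion_finset_le _ _).trans ?_)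
        refine Finset.sum_le_sum fun A hA => (measure_biUnion_finset_le _ _).trans ?_
        exact Finset.sum_le_sum fun j hj => hbound A hA j hj
    _ = _ := by
        simp only [Finset.sum_const, Finset.card_powerset, Finset.card_range, nsmul_eq_mul]
        clear_value c
        rw [ENNReal.ofReal_mul (p := 2) (by positivity),
          ENNReal.ofReal_mul (p := 2 ^ (4 * q)) (by positivity),
          ENNReal.ofReal_mul (p := 4 * q + 1) (by positivity)]
        have e1 : ENNReal.ofReal (2 ^ (4 * q)) = ((2 ^ (4 * q) : ℕ) : ℝ≥0∞) := by
          rw [← ENNReal.ofReal_natCast]; push_cast; rfl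
        have e2 : ENNReal.ofReal (4 * q + 1) = ((4 * q + 1 : ℕ) : ℝ≥0∞) := by
          rw [← ENNReal.ofReal_natCast]; push_cast; rfl
        have e3 : ENNReal.ofReal 2 = 2 := by simp
        rw [e1, e2, e3]
        ring

/-- Multiplication by `ω` on the vertices of the torus. -/
def rot : (ZMod n × ZMod n) ≃ (ZMod n × ZMod n) where
  toFun v := (-v.2, v.1 - v.2)
  invFun v := (v.2 - v.1, -v.1)
  left_inv v := by ext <;> simp
  right_inv v := by ext <;> simp

theorem hessL_rot (r : Fin 3) (v : ZMod n × ZMod n) (x : Vs n) :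
    hessL r v (permV rot x) = hessL (r + 1) (rot v) x := by
  rw [hessL_permV, hessL_apply]
  have hadd : ∀ w, rot (v + w) = rot v + rot w := fun w => by
    ext <;> simp [rot] <;> ring
  have hr : r = 0 ∨ r = 1 ∨ r = 2 := by
    fin_cases r <;> simp
  rcases hr with rfl | rfl | rfl
  · have r1 : rot ((1, 0) : ZMod n × ZMod n) = (0, 1) := by ext <;> simp [rot]
    have r2 : rot ((2, 1) : ZMod n × ZMod n) = (-1, 1) := by ext <;> simp [rot]; ring
    have r3 : rot ((1, 1) : ZMod n × ZMod n) = (-1, 0) := by ext <;> simp [rot]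
    have hd : (0 : Fin 3) + 1 = 1 := rfl
    rw [hd]
    simp only [hess, hadd, r1, r2, r3, if_true, one_ne_zero, if_false]
  · have r1 : rot ((0, 1) : ZMod n × ZMod n) = (-1, -1) := by ext <;> simp [rot]
    have r2 : rot ((-1, 1) : ZMod n × ZMod n) = (-1, -2) := by ext <;> simp [rot]; ring
    have r3 : rot ((-1, 0) : ZMod n × ZMod n) = (0, -1) := by ext <;> simp [rot]
    have hd : (1 : Fin 3) + 1 = 2 := rfl
    have d0 : ((2 : Fin 3) = 0) = False := by simp
    have d1 : ((2 : Fin 3) = 1) = False := by simp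
    rw [hd]
    simp only [hess, hadd, r1, r2, r3, d0, d1, if_true, one_ne_zero, if_false]
  · have r1 : rot ((-1, -1) : ZMod n × ZMod n) = (1, 0) := by ext <;> simp [rot]
    have r2 : rot ((-1, -2) : ZMod n × ZMod n) = (2, 1) := by ext <;> simp [rot]; ring
    have r3 : rot ((0, -1) : ZMod n × ZMod n) = (1, 1) := by ext <;> simp [rot]
    have hd : (2 : Fin 3) + 1 = 0 := rfl
    have d0 : ((2 : Fin 3) = 0) = False := by simp
    have d1 : ((2 : Fin 3) = 1) = False := by simp
    rw [hd]
    simp only [hess, hadd, r1, r2, r3, d0, d1, if_true, if_false]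

/-- Rotation by `ω` permutes the three classes of rhombi cyclically. -/
theorem rot_PV (d : ℝ) (s : Fin 3 → ℝ) :
    μH[d] (PV (n := n) (fun r => s (r - 1))) = μH[d] (PV (n := n) s) := by
  have : permV rot ⁻¹' PV s = PV (n := n) (fun r => s (r - 1)) := by
    ext x
    simp only [Set.mem_preimage, PV, Set.mem_ofPred_eq, hessL_rot]
    constructor
    · intro h r v
      simpa using h (r - 1) (rot.symm v)
    · intro h r v
      simpa using h (r + 1) (rot v)
  rw [← this, IsometryEquiv.hausdorffMeasure_preimage]

theorem rot_FV (d : ℝ) (s : Fin 3 → ℝ) (r : Fin 3) (v : ZMod n × ZMod n) :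
    μH[d] (FV (n := n) (fun r => s (r - 1)) (r + 1) v) = μH[d] (FV (n := n) s r v) := by
  have : permV rot ⁻¹' FV s r v = FV (n := n) (fun r => s (r - 1)) (r + 1) (rot v) := by
    ext x
    simp only [Set.mem_preimage, FV, PV, Set.mem_ofPred_eq, hessL_rot, add_sub_cancel_right]
    refine and_congr_left fun _ => ?_
    constructor
    · intro h r v
      simpa using h (r - 1) (rot.symm v)
    · intro h r v
      simpa using h (r + 1) (rot v)
  rw [FV_eq d _ _ v (rot v), ← this, IsometryEquiv.hausdorffMeasure_preimage]

/-- The bound `PV_le_FV_two` for all classes, by rotation. -/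
theorem PV_le_FV {p : ℕ} (hp1 : 1 ≤ p) (hp : n ^ 2 = p + 2) {s : Fin 3 → ℝ} {m0 : ℝ}
    (hm0 : 0 < m0) (hs : ∀ r, m0 ≤ s r) {q : ℕ} (hq : 0 < q) (i : Fin 3)
    (hqs : 4 * s i ≤ m0 / 1024 * q) (hn : 4 * q + 4 ≤ n) (v : ZMod n × ZMod n) :
    μH[((p + 1 : ℕ) : ℝ)] (PV (n := n) s) ≤
      ENNReal.ofReal (2 * (2 ^ (4 * q) * ((4 * q + 1) *
        (2 * √((p + 1 : ℕ) : ℝ) * (8 * q ^ 2 * (m0 / 1024)))))) * μH[(p : ℝ)] (FV s i v) := by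
  have hi : i = 0 ∨ i = 1 ∨ i = 2 := by
    fin_cases i <;> simp
  have d1 : (2 : Fin 3) - 1 = 1 := rfl
  have d2 : (1 : Fin 3) - 1 = 0 := rfl
  rcases hi with rfl | rfl | rfl
  · have h := PV_le_FV_two hp1 hp (s := fun r => s (r - 1 - 1)) hm0 (fun r => hs _) hq
      (by rw [d1, d2]; exact hqs) hn v
    rw [rot_PV _ (fun r => s (r - 1)), rot_PV] at h
    refine h.trans_eq ?_
    congr 1
    exact (rot_FV _ (fun r => s (r - 1)) 1 v).trans (rot_FV _ s 0 v)
  · have h := PV_le_FV_two hp1 hp (s := fun r => s (r - 1)) hm0 (fun r => hs _) hq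
      (by rw [d1]; exact hqs) hn v
    rw [rot_PV] at h
    refine h.trans_eq ?_
    congr 1
    exact rot_FV _ s 1 v
  · exact PV_le_FV_two hp1 hp hm0 hs hq hqs hn v

/-- A function bounded by `m0 / 4` has hessians at most `m0`, so the polytope contains a sup-norm
ball of radius `m0 / 4`. -/
theorem PV_lower {m : ℕ} (hm1 : 1 ≤ m) (hm : n ^ 2 = m + 1) {s : Fin 3 → ℝ} {m0 : ℝ}
    (hm0 : 0 < m0) (hs : ∀ r, m0 ≤ s r) :
    ENNReal.ofReal ((m0 / 4 * √m / 10) ^ m) ≤ μH[(m : ℝ)] (PV (n := n) s) := by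
  rw [← isometry_subtype_coe.hausdorffMeasure_image (Or.inl (Nat.cast_nonneg m))]
  refine hausdorff_lower (0 : ZMod n × ZMod n) hm1
    (by rw [Fintype.card_prod, ZMod.card, ← sq, hm]) (by positivity) _ fun x hx hb => ?_
  refine ⟨⟨x, mem_Vs.2 hx⟩, fun r v => ?_, rfl⟩
  rw [hessL_apply]
  refine le_trans ?_ (hs r)
  have h := fun v => abs_le.1 (hb v)
  unfold hess
  split_ifs
  · linarith [(h v).1, (h (v + (1, 0))).2, (h (v + (2, 1))).1, (h (v + (1, 1))).2]
  · linarith [(h v).1, (h (v + (0, 1))).2, (h (v + (-1, 1))).1, (h (v + (-1, 0))).2]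
  · linarith [(h v).1, (h (v + (-1, -1))).2, (h (v + (-1, -2))).1, (h (v + (0, -1))).2]

/-- The isoperimetric form of the facet bound: the volume to the power `1 - 1/m` is at most an
exponential in `q` times the area of a facet. -/
theorem PV_rpow_le {p : ℕ} (hp1 : 1 ≤ p) (hp : n ^ 2 = p + 2) {s : Fin 3 → ℝ} {m0 : ℝ}
    (hm0 : 0 < m0) (hs : ∀ r, m0 ≤ s r) {q : ℕ} (hq : 0 < q) (i : Fin 3)
    (hqs : 4 * s i ≤ m0 / 1024 * q) (hn : 4 * q + 4 ≤ n) (v : ZMod n × ZMod n) :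
    (μH[((p + 1 : ℕ) : ℝ)] (PV (n := n) s)).toReal ^ (1 - 1 / ((p + 1 : ℕ) : ℝ)) ≤
      2 ^ (10 * q) * (μH[(p : ℝ)] (FV s i v)).toReal := by
  have hs0 : ∀ r, 0 < s r := fun r => hm0.trans_le (hs r)
  have h1 := PV_le_FV hp1 hp hm0 hs hq i hqs hn v
  have h2 := PV_lower (n := n) (m := p + 1) (by omega) hp hm0 hs
  have hVt := PV_ne_top (n := n) (m := p + 1) hp fun r => (hs0 r).le
  have hFt := FV_ne_top hp hs0 i v
  have hm : (0 : ℝ) < ((p + 1 : ℕ) : ℝ) := by positivity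
  set mm : ℝ := ((p + 1 : ℕ) : ℝ) with hmm
  set V := (μH[mm] (PV (n := n) s)).toReal with hV
  set F := (μH[(p : ℝ)] (FV s i v)).toReal with hF
  have hF0 : 0 ≤ F := ENNReal.toReal_nonneg
  have h1' : V ≤ 2 * (2 ^ (4 * q) * ((4 * q + 1) *
        (2 * √mm * (8 * q ^ 2 * (m0 / 1024))))) * F := by
    have := ENNReal.toReal_mono (ENNReal.mul_ne_top ENNReal.ofReal_ne_top hFt) h1
    rwa [ENNReal.toReal_mul, ENNReal.toReal_ofReal (by positivity)] at this
  have hL : 0 < m0 / 4 * √mm / 10 := by positivity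
  have h2' : (m0 / 4 * √mm / 10) ^ (p + 1) ≤ V := (ENNReal.ofReal_le_iff_le_toReal hVt).1 h2
  have hV0 : 0 < V := lt_of_lt_of_le (by positivity) h2'
  have h3 : m0 / 4 * √mm / 10 ≤ V ^ (1 / mm) := by
    have := Real.rpow_le_rpow (by positivity) h2' (z := 1 / mm) (by positivity)
    rwa [one_div, hmm, Real.pow_rpow_inv_natCast hL.le (by omega), ← one_div] at this
  rw [Real.rpow_sub hV0, Real.rpow_one, div_le_iff₀ (by positivity)]
  have hq1 : (1 : ℝ) ≤ q := by exact_mod_cast hq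
  have hq2 : (q : ℝ) ≤ 2 ^ q := by exact_mod_cast (Nat.lt_two_pow_self (n := q)).le
  have hcst : (2 : ℝ) ^ (4 * q) * ((4 * q + 1) * q ^ 2) * (5 / 4) ≤ 2 ^ (10 * q) := by
    calc (2 : ℝ) ^ (4 * q) * ((4 * q + 1) * q ^ 2) * (5 / 4)
        ≤ 2 ^ (4 * q) * ((5 * 2 ^ q) * (2 ^ q) ^ 2) * (8 / 5) := by
          have h5 : (4 * q + 1 : ℝ) ≤ 5 * 2 ^ q := by linarith
          have h6 : (5 / 4 : ℝ) ≤ 8 / 5 := by norm_num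
          refine mul_le_mul ?_ h6 (by norm_num) (by positivity)
          gcongr
      _ = 2 ^ (7 * q + 3) := by ring
      _ ≤ 2 ^ (10 * q) := pow_le_pow_right₀ (by norm_num) (by omega)
  calc V ≤ 2 * (2 ^ (4 * q) * ((4 * q + 1) * (2 * √mm * (8 * q ^ 2 * (m0 / 1024))))) * F := h1'
    _ = 2 ^ (4 * q) * ((4 * q + 1) * q ^ 2) * (5 / 4) * F * (m0 / 4 * √mm / 10) := by ring
    _ ≤ 2 ^ (10 * q) * F * V ^ (1 / mm) := by gcongr

end FacetBound

/-! ### The facet bound -/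

/-- Lemma: lower bound on facet surface areas.  There is a universal
constant `C > 1` such that for every `s` with `0 < s₀ ≤ s₁ ≤ s₂`, every `i ∈ {0,1,2}` and
all sufficiently large `n`, the `(n²-2)`-dimensional surface area of every facet of
`P_n(s)` corresponding to an edge of `E_i(T_n)` is at least
`(s₀/(C s₂))^{C s_i/s₀} |P_n(s)|^{1 - 1/(n²-1)}`. -/
theorem stmt10 :
    ∃ C : ℝ, 1 < C ∧
      ∀ (s : Fin 3 → ℝ), 0 < s 0 → s 0 ≤ s 1 → s 1 ≤ s 2 →
        ∀ i : Fin 3, ∃ N : ℕ, ∀ (n : ℕ) [NeZero n], N ≤ n →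
          ∀ v : ZMod n × ZMod n,
            (s 0 / (C * s 2)) ^ (C * s i / s 0)
                * evol n ((n : ℝ) ^ 2 - 1) (polyP n s) ^ (1 - 1 / ((n : ℝ) ^ 2 - 1))
              ≤ evol n ((n : ℝ) ^ 2 - 2) (facet n s i v) := by
  refine ⟨100000, by norm_num, fun s h0 h01 h12 i => ?_⟩
  have hs : ∀ r, s 0 ≤ s r := by
    intro r
    fin_cases r
    · exact le_rfl
    · exact h01
    · exact h01.trans h12
  set K : ℝ := s i / s 0 with hK
  have hK1 : 1 ≤ K := (one_le_div h0).2 (hs i)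
  -- `4 * s i ≤ s 0 / 1024 * q` requires `q ≥ 4096 * K`
  set q : ℕ := ⌈4096 * K⌉₊ with hqdef
  have hqK : 4096 * K ≤ q := Nat.le_ceil _
  have hqK' : (q : ℝ) ≤ 4097 * K := by
    have := Nat.ceil_lt_add_one (a := 4096 * K) (by positivity)
    linarith
  have hq : 0 < q := Nat.ceil_pos.2 (by positivity)
  have hqs : 4 * s i ≤ s 0 / 1024 * q := by
    have : s i = K * s 0 := by rw [hK, div_mul_cancel₀ _ h0.ne']
    rw [this]
    nlinarith
  refine ⟨4 * q + 4, fun n _ hn v => ?_⟩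
  obtain ⟨p, hp⟩ : ∃ p, n ^ 2 = p + 2 := ⟨n ^ 2 - 2, by
    have : 4 ^ 2 ≤ n ^ 2 := Nat.pow_le_pow_left (by omega) 2
    omega⟩
  have hp1 : 1 ≤ p := by
    have : 4 ^ 2 ≤ n ^ 2 := Nat.pow_le_pow_left (by omega) 2
    omega
  have hnp : (n : ℝ) ^ 2 = p + 2 := by exact_mod_cast hp
  have e1 : (n : ℝ) ^ 2 - 1 = ((p + 1 : ℕ) : ℝ) := by rw [hnp]; push_cast; ring
  have e2 : (n : ℝ) ^ 2 - 2 = (p : ℝ) := by rw [hnp]; ring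
  rw [e1, e2, evol_polyP (Nat.cast_nonneg _), evol_facet (Nat.cast_nonneg _)]
  have hmain := PV_rpow_le hp1 hp h0 hs hq i hqs hn v
  -- the constant `100000` dominates `10 * q / K ≤ 10 * 4097`
  have hb : (s 0 / (100000 * s 2)) ^ (100000 * s i / s 0) ≤ ((2 : ℝ) ^ (10 * q))⁻¹ := by
    have hs2 : 0 < s 2 := h0.trans_le (hs 2)
    have hbase : s 0 / (100000 * s 2) ≤ 1 / 2 := by
      rw [div_le_iff₀ (by positivity)]
      linarith [hs 2]
    have hexp : ((10 * q : ℕ) : ℝ) ≤ 100000 * s i / s 0 := by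
      rw [mul_div_assoc, ← hK]
      push_cast
      linarith
    calc (s 0 / (100000 * s 2)) ^ (100000 * s i / s 0)
        ≤ (1 / 2 : ℝ) ^ (100000 * s i / s 0) :=
          Real.rpow_le_rpow (by positivity) hbase ((Nat.cast_nonneg _).trans hexp)
      _ ≤ (1 / 2 : ℝ) ^ ((10 * q : ℕ) : ℝ) :=
          Real.rpow_le_rpow_of_exponent_ge (by norm_num) (by norm_num) hexp
      _ = ((2 : ℝ) ^ (10 * q))⁻¹ := by
          rw [Real.rpow_natCast, one_div, inv_pow]
  calc _ ≤ ((2 : ℝ) ^ (10 * q))⁻¹ * (2 ^ (10 * q) * (μH[(p : ℝ)] (FV s i v)).toReal) := by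
        gcongr
    _ = (μH[(p : ℝ)] (FV s i v)).toReal := by
        rw [← mul_assoc, inv_mul_cancel₀ (by positivity), one_mul]
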